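/- For the doubly symmetric binary source with crossover probability ρ ∈ [0,1/2] and Hamming distortions, at the threshold d* = 1/2 − (1/2)√(1−2ρ) the common-reconstruction rate-distortion function satisfies R_CR(d*,d*) = K(X;Y) − R_X(d*) = K(X;Y) − R_Y(d*), where K(X;Y) is Wyner's common information and R_X, R_Y are the marginal rate-distortion functions. -/

import Mathlib

open scoped BigOperators Classical

noncomputable section

namespace TWR

/-- Base-2 Shannon entropy of a finitely supported distribution (with the
convention `0 * log 0 = 0`, automatic since `Real.logb 2 0 = 0`). -/
def H2 {α : Type} [Fintype α] (p : α → ℝ) : ℝ :=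
  -∑ a, p a * Real.logb 2 (p a)

/-- `p` is a probability mass function. -/
def IsPmf {α : Type} [Fintype α] (p : α → ℝ) : Prop :=
  (∀ a, 0 ≤ p a) ∧ ∑ a, p a = 1

/-- `W` is a conditional pmf. -/
def IsCondPmf {α β : Type} [Fintype β] (W : α → β → ℝ) : Prop :=
  ∀ a, IsPmf (W a)

/-- Mutual information `I(A;B)` (base 2) of a joint pmf on `α × β`. -/
def MI {α β : Type} [Fintype α] [Fintype β] (p : α × β → ℝ) : ℝ :=
  H2 (fun a => ∑ b, p (a, b)) + H2 (fun b => ∑ a, p (a, b)) - H2 p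

/-- Conditional entropy `H(A|B)` of a joint pmf on `α × β`. -/
def condH {α β : Type} [Fintype α] [Fintype β] (p : α × β → ℝ) : ℝ :=
  H2 p - H2 (fun b => ∑ a, p (a, b))

/-- Conditional mutual information `I(A;C|B)` of a joint pmf on `α × β × γ`,
conditioning on the middle coordinate (`I(A;C|B) = H(A,B)+H(B,C)-H(A,B,C)-H(B)`). -/
def condMI {α β γ : Type} [Fintype α] [Fintype β] [Fintype γ] (p : α × β × γ → ℝ) : ℝ :=
  H2 (fun ab : α × β => ∑ c, p (ab.1, ab.2, c)) +
    H2 (fun bc : β × γ => ∑ a, p (a, bc.1, bc.2)) -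
    H2 p - H2 (fun b : β => ∑ a, ∑ c, p (a, b, c))

/-- Markov chain `A − B − C` for a joint pmf on `α × β × γ`. -/
def Markov {α β γ : Type} [Fintype α] [Fintype β] [Fintype γ] (p : α × β × γ → ℝ) : Prop :=
  ∀ a b c, p (a, b, c) * (∑ a', ∑ c', p (a', b, c')) =
    (∑ c', p (a, b, c')) * (∑ a', p (a', b, c))

variable {𝒳 𝒴 Xh Yh 𝒲 𝒰 𝒱 : Type}
variable [Fintype 𝒳] [Fintype 𝒴] [Fintype Xh] [Fintype Yh]
variable [Fintype 𝒲] [Fintype 𝒰] [Fintype 𝒱]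

/-- The i.i.d. block source. -/
def iid (q : 𝒳 × 𝒴 → ℝ) (n : ℕ) : (Fin n → 𝒳) × (Fin n → 𝒴) → ℝ :=
  fun xy => ∏ i, q (xy.1 i, xy.2 i)

/-- Average distortion at receiver 1 of the RD code `(f, g1, ·)`. -/
def Delta1 (q : 𝒳 × 𝒴 → ℝ) (δ1 : 𝒳 → Xh → ℝ) {n m : ℕ}
    (f : (Fin n → 𝒳) × (Fin n → 𝒴) → Fin m)
    (g1 : Fin m × (Fin n → 𝒴) → Fin n → Xh) : ℝ :=
  ∑ xy : (Fin n → 𝒳) × (Fin n → 𝒴),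
    iid q n xy * ((n : ℝ)⁻¹ * ∑ i, δ1 (xy.1 i) (g1 (f xy, xy.2) i))

/-- Average distortion at receiver 2 of the RD code `(f, ·, g2)`. -/
def Delta2 (q : 𝒳 × 𝒴 → ℝ) (δ2 : 𝒴 → Yh → ℝ) {n m : ℕ}
    (f : (Fin n → 𝒳) × (Fin n → 𝒴) → Fin m)
    (g2 : Fin m × (Fin n → 𝒳) → Fin n → Yh) : ℝ :=
  ∑ xy : (Fin n → 𝒳) × (Fin n → 𝒴),
    iid q n xy * ((n : ℝ)⁻¹ * ∑ i, δ2 (xy.2 i) (g2 (f xy, xy.1) i))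

/-- `r` is a `(d1,d2)`-achievable rate (source coding). -/
def RDAchievable (q : 𝒳 × 𝒴 → ℝ) (δ1 : 𝒳 → Xh → ℝ) (δ2 : 𝒴 → Yh → ℝ)
    (d1 d2 r : ℝ) : Prop :=
  ∀ ε > (0 : ℝ), ∃ (n m : ℕ) (f : (Fin n → 𝒳) × (Fin n → 𝒴) → Fin m)
    (g1 : Fin m × (Fin n → 𝒴) → Fin n → Xh)
    (g2 : Fin m × (Fin n → 𝒳) → Fin n → Yh),
    0 < n ∧ Real.logb 2 m / n ≤ r + ε ∧
    Delta1 q δ1 f g1 ≤ d1 + ε ∧ Delta2 q δ2 f g2 ≤ d2 + ε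

/-- The rate-distortion function `R(d1,d2)`. -/
def RD (q : 𝒳 × 𝒴 → ℝ) (δ1 : 𝒳 → Xh → ℝ) (δ2 : 𝒴 → Yh → ℝ) (d1 d2 : ℝ) : ℝ :=
  sInf {r : ℝ | 0 ≤ r ∧ RDAchievable q δ1 δ2 d1 d2 r}

/-- `r` is `(d1,d2)`-achievable with common reconstructions. -/
def CRAchievable (q : 𝒳 × 𝒴 → ℝ) (δ1 : 𝒳 → Xh → ℝ) (δ2 : 𝒴 → Yh → ℝ)
    (d1 d2 r : ℝ) : Prop :=
  ∀ ε > (0 : ℝ), ∃ (n m : ℕ) (f : (Fin n → 𝒳) × (Fin n → 𝒴) → Fin m)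
    (g1 : Fin m × (Fin n → 𝒴) → Fin n → Xh)
    (g2 : Fin m × (Fin n → 𝒳) → Fin n → Yh)
    (φ1 : Fin m × (Fin n → 𝒴) → Fin n → Yh)
    (φ2 : Fin m × (Fin n → 𝒳) → Fin n → Xh),
    0 < n ∧ Real.logb 2 m / n ≤ r + ε ∧
    Delta1 q δ1 f g1 ≤ d1 + ε ∧ Delta2 q δ2 f g2 ≤ d2 + ε ∧
    (∑ xy : (Fin n → 𝒳) × (Fin n → 𝒴),
      if φ2 (f xy, xy.1) = g1 (f xy, xy.2) then 0 else iid q n xy) ≤ ε ∧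
    (∑ xy : (Fin n → 𝒳) × (Fin n → 𝒴),
      if φ1 (f xy, xy.2) = g2 (f xy, xy.1) then 0 else iid q n xy) ≤ ε

/-- The common-reconstruction rate-distortion function `R_CR(d1,d2)`. -/
def CRRD (q : 𝒳 × 𝒴 → ℝ) (δ1 : 𝒳 → Xh → ℝ) (δ2 : 𝒴 → Yh → ℝ) (d1 d2 : ℝ) : ℝ :=
  sInf {r : ℝ | 0 ≤ r ∧ CRAchievable q δ1 δ2 d1 d2 r}

/-- The conditional rate-distortion function `R_{X|Y}(d1)`. -/
def condRD (q : 𝒳 × 𝒴 → ℝ) (δ1 : 𝒳 → Xh → ℝ) (d1 : ℝ) : ℝ :=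
  sInf {r : ℝ | ∃ W : 𝒳 × 𝒴 → Xh → ℝ, IsCondPmf W ∧
    (∑ x, ∑ y, ∑ xh, q (x, y) * W (x, y) xh * δ1 x xh) ≤ d1 ∧
    r = condMI (fun t : 𝒳 × 𝒴 × Xh => q (t.1, t.2.1) * W (t.1, t.2.1) t.2.2)}

/-- Swap the two components of a joint source. -/
def swap (q : 𝒳 × 𝒴 → ℝ) : 𝒴 × 𝒳 → ℝ := fun t => q (t.2, t.1)

/-- The marginal rate-distortion function `R_X(d)`. -/
def margRD (qX : 𝒳 → ℝ) (δ1 : 𝒳 → Xh → ℝ) (d1 : ℝ) : ℝ :=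
  sInf {r : ℝ | ∃ W : 𝒳 → Xh → ℝ, IsCondPmf W ∧
    (∑ x, ∑ xh, qX x * W x xh * δ1 x xh) ≤ d1 ∧
    r = MI (fun t : 𝒳 × Xh => qX t.1 * W t.1 t.2)}

def margX (q : 𝒳 × 𝒴 → ℝ) : 𝒳 → ℝ := fun x => ∑ y, q (x, y)
def margY (q : 𝒳 × 𝒴 → ℝ) : 𝒴 → ℝ := fun y => ∑ x, q (x, y)

/-- The joint rate-distortion function `R_{XY}(d1,d2)`. -/
def jointRD (q : 𝒳 × 𝒴 → ℝ) (δ1 : 𝒳 → Xh → ℝ) (δ2 : 𝒴 → Yh → ℝ) (d1 d2 : ℝ) : ℝ :=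
  sInf {r : ℝ | ∃ W : 𝒳 × 𝒴 → Xh × Yh → ℝ, IsCondPmf W ∧
    (∑ xy : 𝒳 × 𝒴, ∑ z : Xh × Yh, q xy * W xy z * δ1 xy.1 z.1) ≤ d1 ∧
    (∑ xy : 𝒳 × 𝒴, ∑ z : Xh × Yh, q xy * W xy z * δ2 xy.2 z.2) ≤ d2 ∧
    r = MI (fun t : (𝒳 × 𝒴) × (Xh × Yh) => q t.1 * W t.1 t.2)}

/-- The Wyner–Ziv rate-distortion function `R^{WZ}_{X|Y}(d1)`
(with auxiliary alphabet of cardinality `|𝒳| + 1`). -/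
def wzRD (q : 𝒳 × 𝒴 → ℝ) (δ1 : 𝒳 → Xh → ℝ) (d1 : ℝ) : ℝ :=
  sInf {r : ℝ | ∃ p : Fin (Fintype.card 𝒳 + 1) × 𝒳 × 𝒴 → ℝ, IsPmf p ∧
    (∀ x y, (∑ a, p (a, x, y)) = q (x, y)) ∧ Markov p ∧
    (∃ π1 : Fin (Fintype.card 𝒳 + 1) × 𝒴 → Xh,
      (∑ a, ∑ x, ∑ y, p (a, x, y) * δ1 x (π1 (a, y))) ≤ d1) ∧
    r = condMI (fun t : 𝒳 × 𝒴 × Fin (Fintype.card 𝒳 + 1) => p (t.2.2, t.1, t.2.1))}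

/-- The set over which the single-letter CR formula
`max{I(X;X̂,Ŷ|Y), I(Y;X̂,Ŷ|X)}` is minimised. -/
def crFormulaSet (q : 𝒳 × 𝒴 → ℝ) (δ1 : 𝒳 → Xh → ℝ) (δ2 : 𝒴 → Yh → ℝ)
    (d1 d2 : ℝ) : Set ℝ :=
  {r : ℝ | ∃ W : 𝒳 × 𝒴 → Xh × Yh → ℝ, IsCondPmf W ∧
    (∑ x, ∑ y, ∑ z : Xh × Yh, q (x, y) * W (x, y) z * δ1 x z.1) ≤ d1 ∧
    (∑ x, ∑ y, ∑ z : Xh × Yh, q (x, y) * W (x, y) z * δ2 y z.2) ≤ d2 ∧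
    r = max
      (condMI (fun t : 𝒳 × 𝒴 × (Xh × Yh) => q (t.1, t.2.1) * W (t.1, t.2.1) t.2.2))
      (condMI (fun t : 𝒴 × 𝒳 × (Xh × Yh) => q (t.2.1, t.1) * W (t.2.1, t.1) t.2.2))}

/-- Joint law of source blocks and channel outputs for a JSC encoder. -/
def jscP (q : 𝒳 × 𝒴 → ℝ) (qUV : 𝒲 → 𝒰 × 𝒱 → ℝ) {n m : ℕ}
    (f : (Fin n → 𝒳) × (Fin n → 𝒴) → Fin m → 𝒲)
    (x : Fin n → 𝒳) (y : Fin n → 𝒴) (u : Fin m → 𝒰) (v : Fin m → 𝒱) : ℝ :=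
  (∏ i, q (x i, y i)) * ∏ j, qUV (f (x, y) j) (u j, v j)

/-- `(d1,d2)` is achievable by joint source-channel coding with source rate `κs`
and channel rate `κc` (bandwidth expansion `κc/κs`). -/
def JSCAchievable (q : 𝒳 × 𝒴 → ℝ) (qUV : 𝒲 → 𝒰 × 𝒱 → ℝ)
    (δ1 : 𝒳 → Xh → ℝ) (δ2 : 𝒴 → Yh → ℝ) (κs κc d1 d2 : ℝ) : Prop :=
  ∀ ε > (0 : ℝ), ∃ (t n m : ℕ) (f : (Fin n → 𝒳) × (Fin n → 𝒴) → Fin m → 𝒲)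
    (g1 : (Fin m → 𝒰) × (Fin n → 𝒴) → Fin n → Xh)
    (g2 : (Fin m → 𝒱) × (Fin n → 𝒳) → Fin n → Yh),
    0 < t ∧ (n : ℝ) = κs * t ∧ (m : ℝ) = κc * t ∧
    (∑ x : Fin n → 𝒳, ∑ y : Fin n → 𝒴, ∑ u : Fin m → 𝒰, ∑ v : Fin m → 𝒱,
      jscP q qUV f x y u v * ((n : ℝ)⁻¹ * ∑ i, δ1 (x i) (g1 (u, y) i))) ≤ d1 + ε ∧
    (∑ x : Fin n → 𝒳, ∑ y : Fin n → 𝒴, ∑ u : Fin m → 𝒰, ∑ v : Fin m → 𝒱,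
      jscP q qUV f x y u v * ((n : ℝ)⁻¹ * ∑ i, δ2 (y i) (g2 (v, x) i))) ≤ d2 + ε

/-- `(d1,d2)` is achievable by joint source-channel coding with common
reconstructions, source rate `κs` and channel rate `κc`. -/
def CRJSCAchievable (q : 𝒳 × 𝒴 → ℝ) (qUV : 𝒲 → 𝒰 × 𝒱 → ℝ)
    (δ1 : 𝒳 → Xh → ℝ) (δ2 : 𝒴 → Yh → ℝ) (κs κc d1 d2 : ℝ) : Prop :=
  ∀ ε > (0 : ℝ), ∃ (t n m : ℕ) (f : (Fin n → 𝒳) × (Fin n → 𝒴) → Fin m → 𝒲)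
    (g1 : (Fin m → 𝒰) × (Fin n → 𝒴) → Fin n → Xh)
    (g2 : (Fin m → 𝒱) × (Fin n → 𝒳) → Fin n → Yh)
    (φ1 : (Fin m → 𝒰) × (Fin n → 𝒴) → Fin n → Yh)
    (φ2 : (Fin m → 𝒱) × (Fin n → 𝒳) → Fin n → Xh),
    0 < t ∧ (n : ℝ) = κs * t ∧ (m : ℝ) = κc * t ∧
    (∑ x : Fin n → 𝒳, ∑ y : Fin n → 𝒴, ∑ u : Fin m → 𝒰, ∑ v : Fin m → 𝒱,
      jscP q qUV f x y u v * ((n : ℝ)⁻¹ * ∑ i, δ1 (x i) (g1 (u, y) i))) ≤ d1 + ε ∧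
    (∑ x : Fin n → 𝒳, ∑ y : Fin n → 𝒴, ∑ u : Fin m → 𝒰, ∑ v : Fin m → 𝒱,
      jscP q qUV f x y u v * ((n : ℝ)⁻¹ * ∑ i, δ2 (y i) (g2 (v, x) i))) ≤ d2 + ε ∧
    (∑ x : Fin n → 𝒳, ∑ y : Fin n → 𝒴, ∑ u : Fin m → 𝒰, ∑ v : Fin m → 𝒱,
      if φ2 (v, x) = g1 (u, y) then 0 else jscP q qUV f x y u v) ≤ ε ∧
    (∑ x : Fin n → 𝒳, ∑ y : Fin n → 𝒴, ∑ u : Fin m → 𝒰, ∑ v : Fin m → 𝒱,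
      if φ1 (u, y) = g2 (v, x) then 0 else jscP q qUV f x y u v) ≤ ε

/-- `I(W;U)` under the joint law `pW · qUV` (U-marginal of the broadcast channel). -/
def chMIU (qUV : 𝒲 → 𝒰 × 𝒱 → ℝ) (pW : 𝒲 → ℝ) : ℝ :=
  MI (fun t : 𝒲 × 𝒰 => pW t.1 * ∑ v, qUV t.1 (t.2, v))

/-- `I(W;V)` under the joint law `pW · qUV` (V-marginal of the broadcast channel). -/
def chMIV (qUV : 𝒲 → 𝒰 × 𝒱 → ℝ) (pW : 𝒲 → ℝ) : ℝ :=
  MI (fun t : 𝒲 × 𝒱 => pW t.1 * ∑ u, qUV t.1 (u, t.2))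

/-- The doubly symmetric binary source with crossover probability `ρ`. -/
def dsbs (ρ : ℝ) : Bool × Bool → ℝ :=
  fun t => if t.1 = t.2 then (1 - ρ) / 2 else ρ / 2

/-- The Hamming distortion measure. -/
def dHam {α : Type} : α → α → ℝ := fun a b => if a = b then 0 else 1

/-- The binary entropy function (base 2). -/
def binEnt (x : ℝ) : ℝ := -(x * Real.logb 2 x) - (1 - x) * Real.logb 2 (1 - x)

/-- A difference distortion measure built from a per-letter function of the
(modular) difference. -/
def diffD {l : ℕ} (δ : Fin l → ℝ) : Fin l → Fin l → ℝ := fun a b => δ (a - b)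

/-- Capacity of the modulo-additive channel with noise `pN` and input
distortion constraint `d`. -/
def Cadd {l : ℕ} (δ : Fin l → ℝ) (d : ℝ) (pN : Fin l → ℝ) : ℝ :=
  sSup {r : ℝ | ∃ pW : Fin l → ℝ, IsPmf pW ∧ (∑ w, pW w * δ w) ≤ d ∧
    r = MI (fun t : Fin l × Fin l => pW t.1 * pN (t.2 - t.1))}

/-- The minimax (worst-noise) capacity under distortion constraint `d`. -/
def Cworst {l : ℕ} (δ : Fin l → ℝ) (d : ℝ) : ℝ :=
  sInf {r : ℝ | ∃ pN : Fin l → ℝ, IsPmf pN ∧ (∑ x, pN x * δ x) ≤ d ∧ r = Cadd δ d pN}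

/-- Wyner's common information `K(X;Y)` (auxiliary alphabet of size 4). -/
def wynerK (q : 𝒳 × 𝒴 → ℝ) : ℝ :=
  sInf {r : ℝ | ∃ W : 𝒳 × 𝒴 → Fin 4 → ℝ, IsCondPmf W ∧
    Markov (fun t : 𝒳 × Fin 4 × 𝒴 => q (t.1, t.2.2) * W (t.1, t.2.2) t.2.1) ∧
    r = MI (fun t : (𝒳 × 𝒴) × Fin 4 => q t.1 * W t.1 t.2)}

/-- The one-description (Kimura–Uyematsu) upper bound `R_U*(d1,d2)`. -/
def oneDescUB (q : 𝒳 × 𝒴 → ℝ) (δ1 : 𝒳 → Xh → ℝ) (δ2 : 𝒴 → Yh → ℝ) (d1 d2 : ℝ) : ℝ :=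
  sInf {r : ℝ | ∃ W : 𝒳 × 𝒴 → Fin (Fintype.card 𝒳 * Fintype.card 𝒴 + 2) → ℝ,
    IsCondPmf W ∧
    (∃ π1 : Fin (Fintype.card 𝒳 * Fintype.card 𝒴 + 2) × 𝒴 → Xh,
      (∑ x, ∑ y, ∑ c, q (x, y) * W (x, y) c * δ1 x (π1 (c, y))) ≤ d1) ∧
    (∃ π2 : Fin (Fintype.card 𝒳 * Fintype.card 𝒴 + 2) × 𝒳 → Yh,
      (∑ x, ∑ y, ∑ c, q (x, y) * W (x, y) c * δ2 y (π2 (c, x))) ≤ d2) ∧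
    r = max
      (condMI (fun t : 𝒳 × 𝒴 × Fin (Fintype.card 𝒳 * Fintype.card 𝒴 + 2) =>
        q (t.1, t.2.1) * W (t.1, t.2.1) t.2.2))
      (condMI (fun t : 𝒴 × 𝒳 × Fin (Fintype.card 𝒳 * Fintype.card 𝒴 + 2) =>
        q (t.2.1, t.1) * W (t.2.1, t.1) t.2.2))}

end TWR

/-!
Write `ρ = 2a(1 - a)` with `a ≤ 1/2`, so that `a` is the threshold, and let `W` be a uniform bit
observed through two independent binary symmetric channels with crossover probability `a`. The two
observations form the source `(X, Y)`, hence `X - W - Y` is a Markov chain, and `W` reproduces both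
`X` and `Y` within distortion `a`.

* `W` attains Wyner's common information, `K = 1 + h(ρ) - 2h(a)`. In general
  `I(X,Y;W) = H(X,Y) - H(X|W) - H(Y|W)`, while the correlation of the source is the mean over `W` of
  the product of the conditional biases of `X` and `Y`. By AM-GM the squared biases are large on
  average, and the entropy of a bit is a decreasing concave function of its squared bias.
* `W` attains `R_X(a) = R_Y(a) = 1 - h(a)`.
* Used as a common reconstruction, `W` costs `I(X;W|Y) = H(X|Y) - H(X|W) = h(ρ) - h(a)`, by a random
  codebook whose words are hashed into bins. No code, even without common reconstructions, does
  better: a message and the side information turn the binary symmetric channel from the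
  reconstruction into a law of the source block given the side information, and Gibbs' inequality
  applied to the mixture of these laws over all messages bounds `n H(X|Y)` by `log |ℳ| + n h(a)`.

The claim is then the identity `h(ρ) - h(a) = K - (1 - h(a))`.
-/

namespace TWR

section Entropy

variable {α β γ : Type} [Fintype α] [Fintype β] [Fintype γ]

lemma H2_eq_sum_negMulLog_div (p : α → ℝ) : H2 p = (∑ a, Real.negMulLog (p a)) / Real.log 2 := by
  simp only [H2, Real.logb, Real.negMulLog, Finset.sum_div, ← Finset.sum_neg_distrib]
  exact Finset.sum_congr rfl fun a _ => by ring

lemma binEnt_eq_binEntropy_div (x : ℝ) : binEnt x = Real.binEntropy x / Real.log 2 := by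
  rw [binEnt, Real.binEntropy, Real.log_inv, Real.log_inv, Real.logb, Real.logb]
  ring

lemma H2_comp_equiv (e : α ≃ β) (p : β → ℝ) : H2 (fun a => p (e a)) = H2 p := by
  simp only [H2]
  rw [e.sum_comp fun b => p b * Real.logb 2 (p b)]

lemma IsPmf.mem_Icc {p : α → ℝ} (hp : IsPmf p) (a : α) : p a ∈ Set.Icc (0 : ℝ) 1 :=
  ⟨hp.1 a, hp.2 ▸ Finset.single_le_sum (fun b _ => hp.1 b) (Finset.mem_univ a)⟩

lemma H2_bool {p : Bool → ℝ} (hp : ∑ b, p b = 1) : H2 p = binEnt (p true) := by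
  rw [Fintype.sum_bool] at hp
  rw [H2, binEnt, Fintype.sum_bool, ← eq_sub_of_add_eq' hp]
  ring

lemma isPmf_mul_condPmf {p : α → ℝ} (hp : IsPmf p) {W : α → β → ℝ} (hW : IsCondPmf W) :
    IsPmf fun t : α × β => p t.1 * W t.1 t.2 :=
  ⟨fun _ => mul_nonneg (hp.1 _) ((hW _).1 _), by
    simp only [Fintype.sum_prod_type, ← Finset.mul_sum, (hW _).2, mul_one, hp.2]⟩

lemma H2_chain_rule (p : α → ℝ) {W : α → β → ℝ} (hW : IsCondPmf W) :
    H2 (fun t : α × β => p t.1 * W t.1 t.2) = H2 p + ∑ a, p a * H2 (W a) := by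
  simp only [H2_eq_sum_negMulLog_div, Fintype.sum_prod_type, Real.negMulLog_mul,
    Finset.sum_add_distrib, ← Finset.sum_mul, ← Finset.mul_sum, (hW _).2, one_mul, add_div,
    Finset.sum_div, mul_div_assoc]

lemma H2_prod {p : α → ℝ} {q : β → ℝ} (hp : IsPmf p) (hq : IsPmf q) :
    H2 (fun t : α × β => p t.1 * q t.2) = H2 p + H2 q := by
  rw [H2_chain_rule p (W := fun _ => q) fun _ => hq, ← Finset.sum_mul, hp.2, one_mul]

lemma H2_condIndep (μ : γ → ℝ) {A : γ → α → ℝ} {B : γ → β → ℝ} (hA : IsCondPmf A)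
    (hB : IsCondPmf B) :
    H2 (fun t : (α × β) × γ => μ t.2 * (A t.2 t.1.1 * B t.2 t.1.2)) =
      H2 μ + ∑ c, μ c * (H2 (A c) + H2 (B c)) := by
  have hAB : IsCondPmf fun c (t : α × β) => A c t.1 * B c t.2 := fun c =>
    isPmf_mul_condPmf (hA c) fun _ => hB c
  rw [← H2_comp_equiv (Equiv.prodComm γ (α × β))]
  exact (H2_chain_rule μ hAB).trans <| by simp only [H2_prod (hA _) (hB _)]

lemma H2_le_neg_sum_mul_logb {p q : α → ℝ} (hp : ∀ a, 0 ≤ p a) (hq : ∀ a, 0 ≤ q a)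
    (hsum : ∑ a, q a ≤ ∑ a, p a) (hac : ∀ a, q a = 0 → p a = 0) :
    H2 p ≤ -∑ a, p a * Real.logb 2 (q a) := by
  have pointwise (a : α) : p a * Real.log (q a) ≤ p a * Real.log (p a) + (q a - p a) := by
    rcases (hp a).eq_or_lt with hpa | hpa
    · simp [← hpa, hq a]
    · have hqa : 0 < q a := (hq a).lt_of_ne' fun h => hpa.ne' (hac a h)
      calc p a * Real.log (q a) = p a * Real.log (p a) + p a * Real.log (q a / p a) := by
            rw [Real.log_div hqa.ne' hpa.ne']; ring
        _ ≤ p a * Real.log (p a) + p a * (q a / p a - 1) := by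
            gcongr; exact Real.log_le_sub_one_of_pos (div_pos hqa hpa)
        _ = p a * Real.log (p a) + (q a - p a) := by field_simp
  have total : ∑ a, p a * Real.log (q a) ≤ ∑ a, p a * Real.log (p a) := by
    have := Finset.sum_le_sum fun a (_ : a ∈ Finset.univ) => pointwise a
    rw [Finset.sum_add_distrib, Finset.sum_sub_distrib] at this
    linarith
  simp only [H2, Real.logb, ← mul_div_assoc, ← Finset.sum_div]
  gcongr

lemma H2_snd_eq_neg_sum (p : α × β → ℝ) :
    H2 (fun b => ∑ a, p (a, b)) = -∑ t, p t * Real.logb 2 (∑ a, p (a, t.2)) := by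
  rw [H2, Fintype.sum_prod_type_right]
  simp only [Finset.sum_mul]

omit [Fintype β] in
lemma eq_zero_of_sum_fst_eq_zero {p : α × β → ℝ} (hp : ∀ t, 0 ≤ p t) {t : α × β}
    (h : ∑ a, p (a, t.2) = 0) : p t = 0 :=
  (Finset.sum_eq_zero_iff_of_nonneg fun _ _ => hp _).1 h t.1 (Finset.mem_univ _)

lemma condH_eq_neg_sum {p : α × β → ℝ} (hp : ∀ t, 0 ≤ p t) :
    condH p = -∑ t, p t * Real.logb 2 (p t / ∑ a, p (a, t.2)) := by
  rw [condH, H2_snd_eq_neg_sum, H2, sub_neg_eq_add, neg_add_eq_sub, ← Finset.sum_sub_distrib,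
    ← Finset.sum_neg_distrib]
  refine Finset.sum_congr rfl fun t _ => ?_
  rcases eq_or_ne (p t) 0 with h | h
  · simp [h]
  · rw [Real.logb_div h fun h' => h (eq_zero_of_sum_fst_eq_zero hp h')]
    ring

lemma condH_le_neg_sum_mul_logb {p : α × β → ℝ} (hp : ∀ t, 0 ≤ p t) {V : β → α → ℝ}
    (hV : IsCondPmf V) (hac : ∀ t, V t.2 t.1 = 0 → p t = 0) :
    condH p ≤ -∑ t, p t * Real.logb 2 (V t.2 t.1) := by
  have gibbs := H2_le_neg_sum_mul_logb (q := fun t => (∑ a, p (a, t.2)) * V t.2 t.1) hp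
    (fun t => mul_nonneg (Finset.sum_nonneg fun _ _ => hp _) ((hV _).1 _))
    (by simp only [Fintype.sum_prod_type_right, ← Finset.mul_sum, (hV _).2, mul_one, le_refl])
    (fun t h => (mul_eq_zero.1 h).elim (eq_zero_of_sum_fst_eq_zero hp) (hac t))
  have split : ∑ t, p t * Real.logb 2 ((∑ a, p (a, t.2)) * V t.2 t.1) =
      ∑ t, p t * Real.logb 2 (∑ a, p (a, t.2)) + ∑ t, p t * Real.logb 2 (V t.2 t.1) := by
    rw [← Finset.sum_add_distrib]
    refine Finset.sum_congr rfl fun t _ => ?_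
    rcases eq_or_ne (p t) 0 with h | h
    · simp [h]
    · rw [Real.logb_mul (fun h' => h (eq_zero_of_sum_fst_eq_zero hp h')) (h ∘ hac t), mul_add]
  rw [condH, H2_snd_eq_neg_sum]
  linarith

end Entropy

section ProductLaws

variable {ι α β : Type} [Fintype ι] [Fintype α] [Fintype β]

/-- The law on `ι → α` of independent coordinates, each distributed according to `q`. It serves both
as the law of blocks of letters and as the law of random codebooks and binnings. -/
def piPmf (q : α → ℝ) (s : ι → α) : ℝ :=
  ∏ i, q (s i)

omit [Fintype α] in
lemma piPmf_nonneg {q : α → ℝ} (hq : ∀ a, 0 ≤ q a) (s : ι → α) : 0 ≤ piPmf q s :=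
  Finset.prod_nonneg fun _ _ => hq _

lemma sum_prod_apply [DecidableEq ι] (F : ι → α → ℝ) :
    ∑ s : ι → α, ∏ i, F i (s i) = ∏ i, ∑ a, F i a := by
  rw [Finset.prod_univ_sum, Fintype.piFinset_univ]

lemma isPmf_prod_apply [DecidableEq ι] {F : ι → α → ℝ} (hF : IsCondPmf F) :
    IsPmf fun s : ι → α => ∏ i, F i (s i) :=
  ⟨fun _ => Finset.prod_nonneg fun i _ => (hF i).1 _, by
    simp only [sum_prod_apply, (hF _).2, Finset.prod_const_one]⟩

lemma isPmf_piPmf [DecidableEq ι] {q : α → ℝ} (hq : IsPmf q) : IsPmf (piPmf q : (ι → α) → ℝ) :=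
  isPmf_prod_apply fun _ => hq

lemma sum_piPmf_mul_prod [DecidableEq ι] {q : α → ℝ} (hq : ∑ a, q a = 1) (T : Finset ι)
    (F : ι → α → ℝ) :
    ∑ s : ι → α, piPmf q s * ∏ i ∈ T, F i (s i) = ∏ i ∈ T, ∑ a, q a * F i a := by
  have factor (s : ι → α) : piPmf q s * ∏ i ∈ T, F i (s i) =
      ∏ i, q (s i) * if i ∈ T then F i (s i) else 1 := by
    rw [piPmf, Finset.prod_mul_distrib, Finset.prod_ite_mem, Finset.univ_inter]
  simp only [factor]
  rw [sum_prod_apply fun i a => q a * if i ∈ T then F i a else 1, ← Finset.univ_inter T,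
    ← Finset.prod_ite_mem]
  refine Finset.prod_congr rfl fun i _ => ?_
  by_cases hi : i ∈ T <;> simp [hi, hq]

lemma sum_piPmf_mul_apply [DecidableEq ι] {q : α → ℝ} (hq : ∑ a, q a = 1) (φ : α → ℝ) (i : ι) :
    ∑ s : ι → α, piPmf q s * φ (s i) = ∑ a, q a * φ a := by
  simpa using sum_piPmf_mul_prod hq {i} fun _ => φ

lemma sum_piPmf_mul_sum [DecidableEq ι] {q : α → ℝ} (hq : ∑ a, q a = 1) (φ : α → ℝ) :
    ∑ s : ι → α, piPmf q s * ∑ i, φ (s i) = Fintype.card ι * ∑ a, q a * φ a := by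
  simp_rw [Finset.mul_sum]
  rw [Finset.sum_comm]
  simp only [sum_piPmf_mul_apply hq, Finset.sum_const, Finset.card_univ, nsmul_eq_mul,
    Finset.mul_sum]

lemma H2_piPmf [DecidableEq ι] {q : α → ℝ} (hq : IsPmf q) :
    H2 (piPmf q : (ι → α) → ℝ) = Fintype.card ι * H2 q := by
  have logb_piPmf (s : ι → α) : piPmf q s * Real.logb 2 (piPmf q s) =
      piPmf q s * ∑ i, Real.logb 2 (q (s i)) := by
    by_cases h : ∀ i, q (s i) ≠ 0
    · rw [piPmf, Real.logb_prod _ _ fun i _ => h i]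
    · rw [piPmf, Finset.prod_eq_zero_iff.2 (by simpa using h)]
      simp
  simp only [H2, logb_piPmf, sum_piPmf_mul_sum hq.2 fun a => Real.logb 2 (q a), mul_neg]

end ProductLaws

section IidSource

variable {α β : Type} [Fintype α] [Fintype β]

lemma sum_arrow_prod {n : ℕ} (F : (Fin n → α) × (Fin n → β) → ℝ) :
    ∑ s : Fin n → α × β, F (fun i => (s i).1, fun i => (s i).2) = ∑ xy, F xy :=
  (Equiv.arrowProdEquivProdArrow (Fin n) (fun _ => α) (fun _ => β)).sum_comp F

lemma isPmf_iid {q : α × β → ℝ} (hq : IsPmf q) (n : ℕ) : IsPmf (iid q n) :=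
  ⟨fun _ => Finset.prod_nonneg fun _ _ => hq.1 _, by
    rw [← sum_arrow_prod]; exact (isPmf_piPmf hq).2⟩

lemma isPmf_sum_fst {q : α × β → ℝ} (hq : IsPmf q) : IsPmf fun b => ∑ a, q (a, b) :=
  ⟨fun _ => Finset.sum_nonneg fun _ _ => hq.1 _, by rw [← Fintype.sum_prod_type_right, hq.2]⟩

lemma condH_iid {q : α × β → ℝ} (hq : IsPmf q) (n : ℕ) : condH (iid q n) = n * condH q := by
  have joint : H2 (iid q n) = n * H2 q := by
    rw [← H2_comp_equiv (Equiv.arrowProdEquivProdArrow (Fin n) (fun _ => α) (fun _ => β))]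
    exact (H2_piPmf hq).trans (by rw [Fintype.card_fin])
  have marginal : (fun y => ∑ x, iid q n (x, y)) = piPmf fun b => ∑ a, q (a, b) := by
    funext y
    exact sum_prod_apply fun i a => q (a, y i)
  rw [condH, joint, marginal, H2_piPmf (isPmf_sum_fst hq), condH, Fintype.card_fin, mul_sub]

end IidSource

section Typicality

variable {α κ : Type} [Fintype α]

/-- The probability of the event `E` under the law `P`. -/
def prob (P : α → ℝ) (E : Set α) : ℝ :=
  ∑ a, E.indicator P a

lemma prob_nonneg {P : α → ℝ} (hP : ∀ a, 0 ≤ P a) (E : Set α) : 0 ≤ prob P E :=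
  Finset.sum_nonneg fun _ _ => Set.indicator_nonneg (fun a _ => hP a) _

lemma prob_mono {P : α → ℝ} (hP : ∀ a, 0 ≤ P a) {E F : Set α} (h : E ⊆ F) :
    prob P E ≤ prob P F :=
  Finset.sum_le_sum fun a _ => Set.indicator_le_indicator_of_subset h hP a

lemma sum_ite_zero_eq_prob_compl (P : α → ℝ) (c : α → Prop) [DecidablePred c] :
    ∑ a, (if c a then 0 else P a) = prob P {a | c a}ᶜ := by
  simp [prob, Set.indicator_apply, ite_not]

lemma sum_mul_le_add_mul_prob_compl {P : α → ℝ} (hP : IsPmf P) {F : α → ℝ} {E : Set α} {c D : ℝ}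
    (hE : ∀ a ∈ E, F a ≤ c) (hF : ∀ a, F a ≤ c + D) :
    ∑ a, P a * F a ≤ c + D * prob P Eᶜ := by
  have pointwise (a : α) : P a * F a ≤ P a * c + D * Eᶜ.indicator P a := by
    by_cases ha : a ∈ E
    · simpa [ha] using mul_le_mul_of_nonneg_left (hE a ha) (hP.1 a)
    · simpa [ha, mul_add, mul_comm D] using mul_le_mul_of_nonneg_left (hF a) (hP.1 a)
  refine (Finset.sum_le_sum fun a _ => pointwise a).trans_eq ?_
  rw [Finset.sum_add_distrib, ← Finset.sum_mul, hP.2, one_mul, ← Finset.mul_sum, prob]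

lemma prob_le_sum_of_subset [Fintype κ] {P : α → ℝ} (hP : ∀ a, 0 ≤ P a) {E : Set α} {F : κ → Set α}
    (h : ∀ a ∈ E, P a ≠ 0 → ∃ k, a ∈ F k) : prob P E ≤ ∑ k, prob P (F k) := by
  simp only [prob]
  rw [Finset.sum_comm]
  refine Finset.sum_le_sum fun a _ => Set.indicator_apply_le' (fun ha => ?_) fun _ =>
    Finset.sum_nonneg fun _ _ => Set.indicator_nonneg (fun a _ => hP a) _
  rcases eq_or_ne (P a) 0 with h0 | h0
  · simp [h0, Set.indicator_apply]
  · obtain ⟨k, hk⟩ := h a ha h0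
    calc P a = (F k).indicator P a := (Set.indicator_of_mem hk P).symm
      _ ≤ ∑ k, (F k).indicator P a := Finset.single_le_sum
        (f := fun k => (F k).indicator P a)
        (fun _ _ => Set.indicator_nonneg (fun a _ => hP a) _) (Finset.mem_univ k)

lemma prob_piPmf_le_pow {p : α → ℝ} (hp : ∀ a, 0 ≤ p a) (φ : α → ℝ) (c : ℝ) {t : ℝ}
    (ht : 0 ≤ t) (n : ℕ) :
    prob (piPmf p) {s : Fin n → α | n * c ≤ ∑ i, φ (s i)} ≤
      (∑ a, p a * Real.exp (t * (φ a - c))) ^ n := by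
  rw [Fintype.sum_pow]
  refine Finset.sum_le_sum fun s _ => ?_
  rw [Finset.prod_mul_distrib, ← Real.exp_sum, ← Finset.mul_sum, Finset.sum_sub_distrib,
    Finset.sum_const, Finset.card_univ, Fintype.card_fin, nsmul_eq_mul]
  refine Set.indicator_apply_le' (fun hs => ?_) fun _ =>
    mul_nonneg (piPmf_nonneg hp s) (Real.exp_pos _).le
  exact le_mul_of_one_le_right (piPmf_nonneg hp s)
    (Real.one_le_exp (mul_nonneg ht (sub_nonneg.2 hs)))

lemma exists_sum_mul_exp_lt_one {p : α → ℝ} (hp : ∑ a, p a = 1) {ψ : α → ℝ}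
    (hψ : ∑ a, p a * ψ a < 0) : ∃ t > 0, ∑ a, p a * Real.exp (t * ψ a) < 1 := by
  have deriv_at_zero : HasDerivAt (fun t => ∑ a, p a * Real.exp (t * ψ a)) (∑ a, p a * ψ a) 0 :=
    HasDerivAt.fun_sum fun a _ => by
      simpa using (((hasDerivAt_id (0 : ℝ)).mul_const (ψ a)).exp).const_mul (p a)
  have slope_neg := (hasDerivAt_iff_tendsto_slope.1 deriv_at_zero).eventually_lt_const hψ
  obtain ⟨t, ht, ht0⟩ := ((slope_neg.filter_mono (nhdsGT_le_nhdsNE 0)).and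
    self_mem_nhdsWithin).exists
  rw [slope_def_field, sub_zero, div_lt_iff₀ ht0, zero_mul, sub_neg] at ht
  exact ⟨t, ht0, by simpa [hp] using ht⟩

lemma tendsto_prob_large_deviation {p : α → ℝ} (hp : IsPmf p) {φ : α → ℝ} {c : ℝ}
    (hc : ∑ a, p a * φ a < c) :
    Filter.Tendsto (fun n : ℕ => prob (piPmf p) {s : Fin n → α | n * c ≤ ∑ i, φ (s i)})
      Filter.atTop (nhds 0) := by
  obtain ⟨t, ht0, ht1⟩ := exists_sum_mul_exp_lt_one hp.2 (ψ := fun a => φ a - c) <| by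
    simpa [mul_sub, ← Finset.sum_mul, hp.2] using hc
  refine squeeze_zero (fun n => prob_nonneg (piPmf_nonneg hp.1) _)
    (fun n => prob_piPmf_le_pow hp.1 φ c ht0.le n) (tendsto_pow_atTop_nhds_zero_of_lt_one ?_ ht1)
  exact Finset.sum_nonneg fun a _ => mul_nonneg (hp.1 a) (Real.exp_pos _).le

/-- The words whose letters have positive probability under `p` and along which the empirical mean
of each `φ k` exceeds its expectation by at most `δ`. A finite family of one-sided constraints
stands in for strong typicality: it controls likelihoods and distortions simultaneously. -/
def typical (p : α → ℝ) (φ : κ → α → ℝ) (δ : ℝ) (n : ℕ) : Set (Fin n → α) :=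
  {s | (∀ i, p (s i) ≠ 0) ∧ ∀ k, ∑ i, φ k (s i) ≤ n * (∑ a, p a * φ k a + δ)}

lemma tendsto_prob_compl_typical [Finite κ] {p : α → ℝ} (hp : IsPmf p) (φ : κ → α → ℝ) {δ : ℝ}
    (hδ : 0 < δ) :
    Filter.Tendsto (fun n => prob (piPmf p) (typical p φ δ n)ᶜ) Filter.atTop (nhds 0) := by
  have := Fintype.ofFinite κ
  refine squeeze_zero (fun n => prob_nonneg (piPmf_nonneg hp.1) _) (fun n =>
    prob_le_sum_of_subset (piPmf_nonneg hp.1)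
      (F := fun k => {s | n * (∑ a, p a * φ k a + δ) ≤ ∑ i, φ k (s i)}) fun s hs hPs => ?_) ?_
  · have support : ∀ i, p (s i) ≠ 0 := by simpa [piPmf, Finset.prod_ne_zero_iff] using hPs
    obtain ⟨k, hk⟩ := not_forall.1 fun h => hs ⟨support, h⟩
    exact ⟨k, (not_le.1 hk).le⟩
  · simpa using tendsto_finsetSum Finset.univ fun k _ =>
      tendsto_prob_large_deviation hp (lt_add_of_pos_right (∑ a, p a * φ k a) hδ)

end Typicality

section Converse

variable {𝒳 𝒴 Xh Yh : Type} [Fintype 𝒳] [Fintype 𝒴]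

lemma CRAchievable.rdAchievable {q : 𝒳 × 𝒴 → ℝ} {δ1 : 𝒳 → Xh → ℝ} {δ2 : 𝒴 → Yh → ℝ}
    {d1 d2 r : ℝ} (h : CRAchievable q δ1 δ2 d1 d2 r) : RDAchievable q δ1 δ2 d1 d2 r := by
  intro ε hε
  obtain ⟨n, m, f, g1, g2, -, -, hn, hr, hd1, hd2, -, -⟩ := h ε hε
  exact ⟨n, m, f, g1, g2, hn, hr, hd1, hd2⟩

/-- The decoder side of a code turns each message into a kernel from the side information to the
source; mixing these kernels uniformly over the messages costs at most `log |ℳ|`. -/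
lemma condH_add_sum_mul_logb_le {ℳ : Type} [Fintype ℳ] {P : 𝒳 × 𝒴 → ℝ} (hP : IsPmf P)
    (f : 𝒳 × 𝒴 → ℳ) {K : ℳ × 𝒴 → 𝒳 → ℝ} (hK : IsCondPmf K)
    (hac : ∀ s, K (f s, s.2) s.1 = 0 → P s = 0) :
    condH P + ∑ s, P s * Real.logb 2 (K (f s, s.2) s.1) ≤ Real.logb 2 (Fintype.card ℳ) := by
  have : Nonempty (𝒳 × 𝒴) := by
    by_contra h
    have := not_nonempty_iff.1 h
    simpa using hP.2
  have : Nonempty ℳ := this.map f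
  have card_pos : (0 : ℝ) < Fintype.card ℳ := by exact_mod_cast Fintype.card_pos
  let V : 𝒴 → 𝒳 → ℝ := fun y x => (∑ j, K (j, y) x) / Fintype.card ℳ
  have hV : IsCondPmf V := fun y =>
    ⟨fun x => div_nonneg (Finset.sum_nonneg fun _ _ => (hK _).1 _) card_pos.le, by
      rw [← Finset.sum_div, Finset.sum_comm]
      simp [(hK _).2]⟩
  have le_mixture (s : 𝒳 × 𝒴) : K (f s, s.2) s.1 / Fintype.card ℳ ≤ V s.2 s.1 :=
    div_le_div_of_nonneg_right (Finset.single_le_sum (f := fun j => K (j, s.2) s.1)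
      (fun _ _ => (hK _).1 _) (Finset.mem_univ _)) card_pos.le
  have log_mixture (s : 𝒳 × 𝒴) : P s * (Real.logb 2 (K (f s, s.2) s.1) -
      Real.logb 2 (Fintype.card ℳ)) ≤ P s * Real.logb 2 (V s.2 s.1) := by
    rcases eq_or_ne (P s) 0 with h | h
    · simp [h]
    · have K_pos : 0 < K (f s, s.2) s.1 := ((hK _).1 _).lt_of_ne' (h ∘ hac s)
      rw [← Real.logb_div K_pos.ne' card_pos.ne']
      exact mul_le_mul_of_nonneg_left
        (Real.logb_le_logb_of_le one_lt_two (div_pos K_pos card_pos) (le_mixture s)) (hP.1 s)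
  have gibbs := condH_le_neg_sum_mul_logb hP.1 hV fun s h => hac s <| le_antisymm
    (by simpa [h, div_le_iff₀ card_pos] using le_mixture s) ((hK _).1 _)
  have total := Finset.sum_le_sum fun s (_ : s ∈ Finset.univ) => log_mixture s
  simp only [mul_sub, Finset.sum_sub_distrib, ← Finset.sum_mul, hP.2, one_mul] at total
  linarith

lemma condH_sub_Delta1_le_logb_card {q : 𝒳 × 𝒴 → ℝ} (hq : IsPmf q) {δ1 : 𝒳 → Xh → ℝ}
    {V : Xh → 𝒳 → ℝ} (hV : IsCondPmf V) (hVpos : ∀ xh x, 0 < V xh x) {b c : ℝ}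
    (hbc : ∀ x xh, b - c * δ1 x xh ≤ Real.logb 2 (V xh x)) {n m : ℕ} (hn : 0 < n)
    (f : (Fin n → 𝒳) × (Fin n → 𝒴) → Fin m) (g1 : Fin m × (Fin n → 𝒴) → Fin n → Xh) :
    n * (condH q + b - c * Delta1 q δ1 f g1) ≤ Real.logb 2 m := by
  have hP := isPmf_iid hq n
  have converse := condH_add_sum_mul_logb_le hP f
    (K := fun jy x => ∏ i, V (g1 jy i) (x i)) (fun _ => isPmf_prod_apply fun _ => hV _)
    fun s h => absurd h (Finset.prod_pos fun _ _ => hVpos _ _).ne'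
  have letterwise (s : (Fin n → 𝒳) × (Fin n → 𝒴)) :
      n * b - c * ∑ i, δ1 (s.1 i) (g1 (f s, s.2) i) ≤
        Real.logb 2 (∏ i, V (g1 (f s, s.2) i) (s.1 i)) := by
    rw [Real.logb_prod _ _ fun i _ => (hVpos _ _).ne']
    simpa [Finset.mul_sum] using
      Finset.sum_le_sum fun i (_ : i ∈ Finset.univ) => hbc (s.1 i) (g1 (f s, s.2) i)
  have Delta1_eq : n * Delta1 q δ1 f g1 =
      ∑ s, iid q n s * ∑ i, δ1 (s.1 i) (g1 (f s, s.2) i) := by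
    rw [Delta1, Finset.mul_sum]
    refine Finset.sum_congr rfl fun s _ => ?_
    field_simp
  have average := Finset.sum_le_sum fun s (_ : s ∈ Finset.univ) =>
    mul_le_mul_of_nonneg_left (letterwise s) (hP.1 s)
  simp only [mul_sub, Finset.sum_sub_distrib, ← Finset.sum_mul, hP.2, mul_left_comm (iid q n _) c,
    ← Finset.mul_sum, ← Delta1_eq] at average
  rw [condH_iid hq, Fintype.card_fin] at converse
  linarith

/-- A Lagrangian form of the converse: `V` is the reversed test channel, `c` the slope. -/
lemma RDAchievable.condH_sub_le {q : 𝒳 × 𝒴 → ℝ} (hq : IsPmf q) {δ1 : 𝒳 → Xh → ℝ}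
    {δ2 : 𝒴 → Yh → ℝ} {d1 d2 r : ℝ} (h : RDAchievable q δ1 δ2 d1 d2 r) {V : Xh → 𝒳 → ℝ}
    (hV : IsCondPmf V) (hVpos : ∀ xh x, 0 < V xh x) {b c : ℝ} (hc : 0 ≤ c)
    (hbc : ∀ x xh, b - c * δ1 x xh ≤ Real.logb 2 (V xh x)) : condH q + b - c * d1 ≤ r := by
  refine le_of_forall_pos_le_add fun η hη => ?_
  obtain ⟨n, m, f, g1, g2, hn, hr, hd1, -⟩ := h (η / (1 + c)) (by positivity)
  have hn' : (0 : ℝ) < n := by exact_mod_cast hn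
  have converse := condH_sub_Delta1_le_logb_card hq hV hVpos hbc hn f g1
  rw [← le_div_iff₀' hn'] at converse
  calc condH q + b - c * d1
      = condH q + b - c * (d1 + η / (1 + c)) + c * (η / (1 + c)) := by ring
    _ ≤ condH q + b - c * Delta1 q δ1 f g1 + c * (η / (1 + c)) := by gcongr
    _ ≤ r + η / (1 + c) + c * (η / (1 + c)) := by gcongr; exact converse.trans hr
    _ = r + η := by field_simp; ring

end Converse

section RandomCoding

variable {S Ω : Type} [Fintype S] [Fintype Ω]

lemma IsPmf.exists_le_expectation {μ : S → ℝ} (hμ : IsPmf μ) (F : S → ℝ) :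
    ∃ c, F c ≤ ∑ s, μ s * F s := by
  by_contra! h
  obtain ⟨c, -, hc⟩ := Finset.exists_ne_zero_of_sum_ne_zero (hμ.2.trans_ne one_ne_zero)
  have : ∑ s, μ s * ∑ t, μ t * F t < ∑ s, μ s * F s :=
    Finset.sum_lt_sum (fun s _ => mul_le_mul_of_nonneg_left (h s).le (hμ.1 s))
      ⟨c, Finset.mem_univ c, mul_lt_mul_of_pos_left (h c) ((hμ.1 c).lt_of_ne' hc)⟩
  rw [← Finset.sum_mul, hμ.2, one_mul] at this
  exact this.false

lemma exists_codebook (P : S → ℝ) (T L : S → Finset Ω) (κ : ℝ) {θ : ℝ} (hθ0 : 0 ≤ θ)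
    (hθ1 : θ ≤ 1) :
    ∃ C : Ω → Bool,
      ∑ s, P s * ((if ∀ w ∈ T s, C w = false then 1 else 0) + κ * {w ∈ L s | C w}.card) ≤
        ∑ s, P s * ((1 - θ) ^ (T s).card + κ * (θ * (L s).card)) := by
  let ber : Bool → ℝ := fun b => if b then θ else 1 - θ
  have hber : IsPmf ber := ⟨fun b => by cases b <;> simp [ber, hθ0, hθ1], by simp [ber]⟩
  have miss (s : S) : ∑ C : Ω → Bool, piPmf ber C * (if ∀ w ∈ T s, C w = false then 1 else 0) =
      (1 - θ) ^ (T s).card := by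
    simpa [Finset.prod_ite_zero, ber] using
      sum_piPmf_mul_prod hber.2 (T s) fun _ b => if b = false then 1 else 0
  have clutter (s : S) : ∑ C : Ω → Bool, piPmf ber C * ({w ∈ L s | C w}.card : ℝ) =
      θ * (L s).card := by
    simp only [Finset.natCast_card_filter, Finset.mul_sum]
    rw [Finset.sum_comm]
    simp only [sum_piPmf_mul_apply hber.2 fun b => if b = true then 1 else 0]
    simp [ber, mul_comm]
  obtain ⟨C, hC⟩ := (isPmf_piPmf (ι := Ω) hber).exists_le_expectation fun C =>
    ∑ s, P s * ((if ∀ w ∈ T s, C w = false then 1 else 0) + κ * {w ∈ L s | C w}.card)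
  refine ⟨C, hC.trans_eq ?_⟩
  simp only [← miss, ← clutter, Finset.mul_sum, ← Finset.sum_add_distrib]
  rw [Finset.sum_comm]
  exact Finset.sum_congr rfl fun s _ => Finset.sum_congr rfl fun C _ => by ring

lemma sum_piPmf_uniform_collision {m : ℕ} (hm : 0 < m) {w w' : Ω} (hw : w ≠ w') :
    ∑ M : Ω → Fin m, piPmf (fun _ => (m : ℝ)⁻¹) M * (if M w = M w' then 1 else 0) =
      (m : ℝ)⁻¹ := by
  have hm' : (m : ℝ) ≠ 0 := by positivity
  have by_bin (M : Ω → Fin m) : piPmf (fun _ => (m : ℝ)⁻¹) M * (if M w = M w' then 1 else 0) =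
      ∑ j, piPmf (fun _ => (m : ℝ)⁻¹) M * ∏ v ∈ {w, w'}, if M v = j then 1 else 0 := by
    rw [← Finset.mul_sum]
    simp [Finset.prod_pair hw, eq_comm]
  rw [Finset.sum_congr rfl fun M _ => by_bin M, Finset.sum_comm]
  rw [Finset.sum_congr rfl fun j _ => sum_piPmf_mul_prod (q := fun _ : Fin m => (m : ℝ)⁻¹)
    (by simp [hm']) {w, w'} fun _ b => if b = j then 1 else 0]
  simp [Finset.prod_pair hw, hm']

omit [Fintype Ω] in
lemma exists_binning [Finite Ω] {P : S → ℝ} (hP : ∀ s, 0 ≤ P s) (w₀ : S → Ω)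
    (L : S → Finset Ω) {m : ℕ} (hm : 0 < m) :
    ∃ M : Ω → Fin m,
      ∑ s, P s * {w ∈ L s | w ≠ w₀ s ∧ M w = M (w₀ s)}.card ≤
        ∑ s, P s * ((L s).card / m) := by
  cases nonempty_fintype Ω
  let unif : Fin m → ℝ := fun _ => (m : ℝ)⁻¹
  have hunif : IsPmf unif := ⟨fun _ => by positivity, by simp [unif, hm.ne']⟩
  have collisions (s : S) : ∑ M : Ω → Fin m, piPmf unif M *
      ({w ∈ L s | w ≠ w₀ s ∧ M w = M (w₀ s)}.card : ℝ) ≤ (L s).card / m := by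
    simp only [← Finset.filter_filter, Finset.natCast_card_filter _ (Finset.filter _ _),
      Finset.mul_sum]
    rw [Finset.sum_comm, Finset.sum_congr rfl fun w hw =>
      sum_piPmf_uniform_collision hm (Finset.mem_filter.1 hw).2, Finset.sum_const, nsmul_eq_mul,
      ← div_eq_mul_inv]
    gcongr
    exact Finset.filter_subset _ _
  obtain ⟨M, hM⟩ := (isPmf_piPmf (ι := Ω) hunif).exists_le_expectation fun M =>
    ∑ s, P s * {w ∈ L s | w ≠ w₀ s ∧ M w = M (w₀ s)}.card
  refine ⟨M, hM.trans ?_⟩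
  simp only [Finset.mul_sum]
  rw [Finset.sum_comm]
  simp only [mul_left_comm _ (P _), ← Finset.mul_sum]
  exact Finset.sum_le_sum fun s _ => mul_le_mul_of_nonneg_left (collisions s) (hP s)

lemma exists_codebook_binning {P : S → ℝ} (hP : ∀ s, 0 ≤ P s) [Nonempty Ω] (T L : S → Finset Ω)
    {m : ℕ} (hm : 0 < m) {x : ℝ} (hx : 0 < x) :
    ∃ (C : Ω → Bool) (M : Ω → Fin m) (enc : S → Ω),
      (∀ s, (∃ w ∈ T s, C w) → enc s ∈ T s ∧ C (enc s)) ∧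
      ∑ s, P s * ((if ∀ w ∈ T s, C w = false then 1 else 0) +
          {w ∈ {w ∈ L s | C w} | w ≠ enc s ∧ M w = M (enc s)}.card) ≤
        ∑ s, P s * ((1 + x)⁻¹ ^ (T s).card + x * (L s).card / m) := by
  obtain ⟨C, hC⟩ := exists_codebook P T L (m : ℝ)⁻¹ (θ := x / (1 + x)) (by positivity)
    (by rw [div_le_one (by positivity)]; linarith)
  let enc : S → Ω := fun s => Classical.epsilon fun w => w ∈ T s ∧ C w
  obtain ⟨M, hM⟩ := exists_binning hP enc (fun s => {w ∈ L s | C w}) hm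
  refine ⟨C, M, enc, fun s => Classical.epsilon_spec, ?_⟩
  have one_sub : 1 - x / (1 + x) = (1 + x)⁻¹ := by field_simp; ring
  have clutter_le (s : S) : (m : ℝ)⁻¹ * (x / (1 + x) * (L s).card) ≤ x * (L s).card / m := by
    rw [← div_eq_inv_mul]
    gcongr
    exact div_le_self hx.le (by linarith)
  calc _ ≤ ∑ s, P s * ((if ∀ w ∈ T s, C w = false then 1 else 0) +
        (m : ℝ)⁻¹ * {w ∈ L s | C w}.card) := by
        simp only [mul_add, Finset.sum_add_distrib, ← div_eq_inv_mul] at hM ⊢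
        gcongr
    _ ≤ _ := hC.trans <| Finset.sum_le_sum fun s _ => mul_le_mul_of_nonneg_left
        (add_le_add (by rw [one_sub]) (clutter_le s)) (hP s)

end RandomCoding

section OneShot

variable {𝒳 𝒴 Ω : Type} [Fintype 𝒳] [Fintype 𝒴] [Fintype Ω]

lemma inv_one_add_pow_le {x ν g : ℝ} (hx : 0 < x) (hν : 0 ≤ ν) (hg : g ≤ 1) {k : ℕ}
    (hk : g ≤ k * ν) : (1 + x)⁻¹ ^ k ≤ 2 * (1 - g) + 2 * ν / x := by
  rcases le_or_gt g (1 / 2) with h | h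
  · have : (1 + x)⁻¹ ^ k ≤ 1 :=
      pow_le_one₀ (by positivity) (inv_le_one_of_one_le₀ (by linarith))
    have : 0 ≤ 2 * ν / x := by positivity
    linarith
  · have bernoulli : k * x ≤ (1 + x) ^ k :=
      (le_add_of_nonneg_left zero_le_one).trans (one_add_mul_le_pow (by linarith) k)
    have : (1 + x)⁻¹ ^ k ≤ 2 * ν / x := by
      rw [inv_pow, inv_le_iff_one_le_mul₀ (by positivity)]
      calc 1 ≤ 2 * (k * ν) := by linarith
        _ = 2 * ν / x * (k * x) := by field_simp
        _ ≤ 2 * ν / x * (1 + x) ^ k := by gcongr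
    linarith

/-- Bin decoding: a word of the list `L` that lies in the codebook `C` and in the bin `j`
(an arbitrary word if there is none). -/
def binDecode [Nonempty Ω] {m : ℕ} (C : Ω → Bool) (M : Ω → Fin m) (L : Finset Ω) (j : Fin m) : Ω :=
  Classical.epsilon fun w => w ∈ L ∧ C w ∧ M w = j

omit [Fintype Ω] in
lemma binDecode_eq [Nonempty Ω] {m : ℕ} {C : Ω → Bool} {M : Ω → Fin m} {L : Finset Ω} {w : Ω}
    (hwL : w ∈ L) (hwC : C w) (unique : ∀ w' ∈ L, C w' → w' ≠ w → M w' ≠ M w) :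
    binDecode C M L (M w) = w := by
  obtain ⟨hL, hC, hM⟩ := Classical.epsilon_spec
    (p := fun w' => w' ∈ L ∧ C w' ∧ M w' = M w) ⟨w, hwL, hwC, rfl⟩
  by_contra h
  exact unique _ hL hC h hM

lemma sum_mul_inv_one_add_pow_le {P : 𝒳 → ℝ} (hP : IsPmf P) {V : 𝒳 → Ω → ℝ} (hV : IsCondPmf V)
    (G : Set (𝒳 × Ω)) {ν x : ℝ} (hν : 0 ≤ ν) (hGν : ∀ t ∈ G, V t.1 t.2 ≤ ν) (hx : 0 < x) :
    ∑ s, P s * (1 + x)⁻¹ ^ (Finset.card {w | (s, w) ∈ G}) ≤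
      2 * prob (fun t : 𝒳 × Ω => P t.1 * V t.1 t.2) Gᶜ + 2 * ν / x := by
  let g : 𝒳 → ℝ := fun s => ∑ w with (s, w) ∈ G, V s w
  have g_le_one (s : 𝒳) : g s ≤ 1 := (hV s).2 ▸
    Finset.sum_le_sum_of_subset_of_nonneg (Finset.filter_subset _ _) fun _ _ _ => (hV s).1 _
  have g_le_card (s : 𝒳) : g s ≤ (Finset.card {w | (s, w) ∈ G}) * ν := by
    rw [← nsmul_eq_mul]
    exact Finset.sum_le_card_nsmul _ _ _ fun w hw => hGν (s, w) (Finset.mem_filter.1 hw).2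
  have one_sub (s : 𝒳) : 1 - g s = ∑ w with (s, w) ∉ G, V s w := by
    rw [← (hV s).2, ← Finset.sum_filter_add_sum_filter_not Finset.univ (fun w => (s, w) ∈ G),
      add_sub_cancel_left]
  have prob_compl : prob (fun t : 𝒳 × Ω => P t.1 * V t.1 t.2) Gᶜ = ∑ s, P s * (1 - g s) := by
    simp only [prob, Fintype.sum_prod_type, one_sub, Finset.mul_sum, Finset.sum_filter,
      Set.indicator_apply, Set.mem_compl_iff, mul_ite, mul_zero]
  calc _ ≤ ∑ s, P s * (2 * (1 - g s) + 2 * ν / x) := Finset.sum_le_sum fun s _ =>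
        mul_le_mul_of_nonneg_left (inv_one_add_pow_le hx hν (g_le_one s) (g_le_card s)) (hP.1 s)
    _ = _ := by
        rw [prob_compl, Finset.mul_sum]
        simp only [mul_add, Finset.sum_add_distrib, ← Finset.sum_mul, hP.2, one_mul]
        simp only [mul_left_comm]

/-- Likelihood encoding into a sparse random codebook followed by random binning: the encoder must
find a codeword in `G`, the decoders must find no other codeword of the same bin in their list. -/
lemma exists_oneShot_code [Nonempty Ω] {P : 𝒳 × 𝒴 → ℝ} (hP : IsPmf P) {V : 𝒳 × 𝒴 → Ω → ℝ}
    (hV : IsCondPmf V) {G : Set ((𝒳 × 𝒴) × Ω)} {ν x l : ℝ} (hν : 0 ≤ ν)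
    (hGν : ∀ t ∈ G, V t.1 t.2 ≤ ν) (hx : 0 < x) (L₁ : 𝒴 → Finset Ω) (L₂ : 𝒳 → Finset Ω)
    (hG₁ : ∀ t ∈ G, t.2 ∈ L₁ t.1.2) (hG₂ : ∀ t ∈ G, t.2 ∈ L₂ t.1.1)
    (hL₁ : ∀ y, (L₁ y).card ≤ l) (hL₂ : ∀ x, (L₂ x).card ≤ l) {m : ℕ} (hm : 0 < m) :
    ∃ (f : 𝒳 × 𝒴 → Fin m) (enc : 𝒳 × 𝒴 → Ω) (dec₁ : Fin m × 𝒴 → Ω) (dec₂ : Fin m × 𝒳 → Ω),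
      prob P {s | (s, enc s) ∈ G ∧ dec₁ (f s, s.2) = enc s ∧ dec₂ (f s, s.1) = enc s}ᶜ ≤
        2 * prob (fun t : (𝒳 × 𝒴) × Ω => P t.1 * V t.1 t.2) Gᶜ + 2 * ν / x + 2 * x * l / m := by
  obtain ⟨C, M, enc, henc, hCM⟩ := exists_codebook_binning hP.1
    (fun s : 𝒳 × 𝒴 => {w | (s, w) ∈ G}) (fun s => L₁ s.2 ∪ L₂ s.1) hm hx
  refine ⟨fun s => M (enc s), enc, fun jy => binDecode C M (L₁ jy.2) jy.1,
    fun jx => binDecode C M (L₂ jx.2) jx.1, ?_⟩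
  have error_le (s : 𝒳 × 𝒴) : Set.indicator {s | (s, enc s) ∈ G ∧
      binDecode C M (L₁ s.2) (M (enc s)) = enc s ∧ binDecode C M (L₂ s.1) (M (enc s)) = enc s}ᶜ
      P s ≤ P s * ((if ∀ w ∈ ({w | (s, w) ∈ G} : Finset Ω), C w = false then 1 else 0) +
        {w ∈ {w ∈ L₁ s.2 ∪ L₂ s.1 | C w} | w ≠ enc s ∧ M w = M (enc s)}.card) := by
    refine Set.indicator_apply_le' (fun hs => le_mul_of_one_le_right (hP.1 s) ?_) fun _ =>
      mul_nonneg (hP.1 s) (by positivity)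
    split_ifs with miss
    · exact le_add_of_nonneg_right (Nat.cast_nonneg _)
    rw [zero_add, Nat.one_le_cast, Nat.one_le_iff_ne_zero]
    intro no_collision
    simp only [Finset.card_eq_zero, Finset.filter_eq_empty_iff, Finset.mem_filter,
      Finset.mem_union] at no_collision
    obtain ⟨henc_mem, henc_C⟩ := henc s (by simpa using miss)
    have hencG : (s, enc s) ∈ G := (Finset.mem_filter.1 henc_mem).2
    exact hs ⟨hencG,
      binDecode_eq (hG₁ _ hencG) henc_C fun w hw hC hne h => no_collision ⟨.inl hw, hC⟩ ⟨hne, h⟩,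
      binDecode_eq (hG₂ _ hencG) henc_C fun w hw hC hne h => no_collision ⟨.inr hw, hC⟩ ⟨hne, h⟩⟩
  refine (Finset.sum_le_sum fun s _ => error_le s).trans (hCM.trans ?_)
  simp only [mul_add, Finset.sum_add_distrib]
  refine add_le_add (sum_mul_inv_one_add_pow_le hP hV G hν hGν hx) ?_
  have list_le (s : 𝒳 × 𝒴) : ((L₁ s.2 ∪ L₂ s.1).card : ℝ) ≤ 2 * l := by
    have : ((L₁ s.2 ∪ L₂ s.1).card : ℝ) ≤ (L₁ s.2).card + (L₂ s.1).card := by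
      exact_mod_cast Finset.card_union_le _ _
    linarith [hL₁ s.2, hL₂ s.1]
  calc _ ≤ ∑ s, P s * (x * (2 * l) / m) := Finset.sum_le_sum fun s _ =>
        mul_le_mul_of_nonneg_left (by gcongr; exact list_le s) (hP.1 s)
    _ = 2 * x * l / m := by rw [← Finset.sum_mul, hP.2]; ring

end OneShot

section CommonReconstruction

variable {𝒳 𝒴 Z : Type} [Fintype 𝒳] [Fintype Z]

/-- The conditional law of the common reconstruction given the side information of receiver 1, when
the source has law `q` and the reconstruction is drawn from `W`. The kernel of receiver 2 is
obtained by swapping the two components of the source. -/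
def sideKernel (q : 𝒳 × 𝒴 → ℝ) (W : 𝒳 × 𝒴 → Z → ℝ) (y : 𝒴) (z : Z) : ℝ :=
  (∑ x, q (x, y) * W (x, y) z) / ∑ x, q (x, y)

lemma sideKernel_nonneg {q : 𝒳 × 𝒴 → ℝ} (hq : ∀ s, 0 ≤ q s) {W : 𝒳 × 𝒴 → Z → ℝ}
    (hW : IsCondPmf W) (y : 𝒴) (z : Z) : 0 ≤ sideKernel q W y z :=
  div_nonneg (Finset.sum_nonneg fun _ _ => mul_nonneg (hq _) ((hW _).1 _))
    (Finset.sum_nonneg fun _ _ => hq _)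

lemma sum_sideKernel_le_one (q : 𝒳 × 𝒴 → ℝ) {W : 𝒳 × 𝒴 → Z → ℝ} (hW : IsCondPmf W) (y : 𝒴) :
    ∑ z, sideKernel q W y z ≤ 1 := by
  simp only [sideKernel, ← Finset.sum_div]
  rw [Finset.sum_comm]
  simpa only [← Finset.mul_sum, (hW _).2, mul_one] using div_self_le_one _

lemma sideKernel_pos {q : 𝒳 × 𝒴 → ℝ} (hq : ∀ s, 0 ≤ q s) {W : 𝒳 × 𝒴 → Z → ℝ}
    (hW : IsCondPmf W) {s : 𝒳 × 𝒴} {z : Z} (h : q s * W s z ≠ 0) : 0 < sideKernel q W s.2 z := by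
  have joint_nonneg (x : 𝒳) : 0 ≤ q (x, s.2) * W (x, s.2) z := mul_nonneg (hq _) ((hW _).1 _)
  exact div_pos
    (Finset.sum_pos' (fun x _ => joint_nonneg x)
      ⟨s.1, Finset.mem_univ _, (joint_nonneg s.1).lt_of_ne' h⟩)
    (Finset.sum_pos' (fun _ _ => hq _)
      ⟨s.1, Finset.mem_univ _, (hq s).lt_of_ne' (left_ne_zero_of_mul h)⟩)

lemma prod_eq_two_rpow_sum_logb {ι : Type} [Fintype ι] {f : ι → ℝ} (hf : ∀ i, 0 < f i) :
    ∏ i, f i = 2 ^ ∑ i, Real.logb 2 (f i) := by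
  rw [← Real.logb_prod _ _ fun i _ => (hf i).ne',
    Real.rpow_logb two_pos one_lt_two.ne' (Finset.prod_pos fun i _ => hf i)]

lemma card_filter_le_rpow {α : Type} [Fintype α] {p : α → ℝ} (hp : ∀ a, 0 ≤ p a)
    (hsum : ∑ a, p a ≤ 1) (c : ℝ) : (({a | 2 ^ (-c) ≤ p a} : Finset α).card : ℝ) ≤ 2 ^ c := by
  have markov : ({a | 2 ^ (-c) ≤ p a} : Finset α).card * (2 : ℝ) ^ (-c) ≤ 1 := by
    rw [← nsmul_eq_mul]
    refine (Finset.card_nsmul_le_sum _ p _ fun a ha => (Finset.mem_filter.1 ha).2).trans ?_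
    exact (Finset.sum_le_univ_sum_of_nonneg hp).trans hsum
  rwa [← le_div_iff₀ (by positivity), one_div, ← Real.rpow_neg zero_le_two, neg_neg] at markov

/-- The list of a decoder that sees `y`: the words `z` whose likelihood given `y` under the
memoryless kernel `K` is at least `2 ^ (-c)`. -/
def likelyWords (K : 𝒴 → Z → ℝ) (c : ℝ) {n : ℕ} (y : Fin n → 𝒴) : Finset (Fin n → Z) :=
  {z | 2 ^ (-c) ≤ ∏ i, K (y i) (z i)}

lemma mem_likelyWords {K : 𝒴 → Z → ℝ} {c : ℝ} {n : ℕ} {y : Fin n → 𝒴} {z : Fin n → Z} :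
    z ∈ likelyWords K c y ↔ 2 ^ (-c) ≤ ∏ i, K (y i) (z i) := by
  simp [likelyWords]

lemma mem_likelyWords_of_sum_neg_logb_le {K : 𝒴 → Z → ℝ} {n : ℕ} {y : Fin n → 𝒴} {z : Fin n → Z}
    (hK : ∀ i, 0 < K (y i) (z i)) {c : ℝ} (h : ∑ i, -Real.logb 2 (K (y i) (z i)) ≤ c) :
    z ∈ likelyWords K c y := by
  rw [Finset.sum_neg_distrib] at h
  rw [mem_likelyWords, prod_eq_two_rpow_sum_logb hK]
  exact Real.rpow_le_rpow_of_exponent_le one_le_two (neg_le.1 h)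

lemma card_likelyWords_le {K : 𝒴 → Z → ℝ} (hK : ∀ y z, 0 ≤ K y z) (hsum : ∀ y, ∑ z, K y z ≤ 1)
    (c : ℝ) {n : ℕ} (y : Fin n → 𝒴) : ((likelyWords K c y).card : ℝ) ≤ 2 ^ c :=
  card_filter_le_rpow (fun _ => Finset.prod_nonneg fun _ _ => hK _ _)
    (by rw [sum_prod_apply fun i => K (y i)]
        exact Finset.prod_le_one (fun _ _ => Finset.sum_nonneg fun _ _ => hK _ _)
          fun _ _ => hsum _) c

variable [Fintype 𝒴]

lemma condMI_mul_condPmf (q : 𝒳 × 𝒴 → ℝ) {W : 𝒳 × 𝒴 → Z → ℝ} (hW : IsCondPmf W) :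
    condMI (fun t : 𝒳 × 𝒴 × Z => q (t.1, t.2.1) * W (t.1, t.2.1) t.2.2) =
      condH (fun t : Z × 𝒴 => ∑ x, q (x, t.2) * W (x, t.2) t.1) - ∑ s, q s * H2 (W s) := by
  have joint := (H2_comp_equiv (Equiv.prodAssoc 𝒳 𝒴 Z)
    fun t => q (t.1, t.2.1) * W (t.1, t.2.1) t.2.2).symm.trans (H2_chain_rule q hW)
  have side := H2_comp_equiv (Equiv.prodComm Z 𝒴) fun t => ∑ x, q (x, t.1) * W (x, t.1) t.2
  have marginal : (fun y => ∑ z, ∑ x, q (x, y) * W (x, y) z) = fun y => ∑ x, q (x, y) := by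
    funext y
    rw [Finset.sum_comm]
    simp only [← Finset.mul_sum, (hW _).2, mul_one]
  simp only [Equiv.prodComm_apply, Prod.fst_swap, Prod.snd_swap] at side
  rw [condMI, condH, joint, side, marginal]
  simp only [← Finset.mul_sum, (hW _).2, mul_one]
  ring

lemma sum_mul_neg_logb_sideKernel {q : 𝒳 × 𝒴 → ℝ} (hq : ∀ s, 0 ≤ q s) {W : 𝒳 × 𝒴 → Z → ℝ}
    (hW : IsCondPmf W) :
    ∑ t : (𝒳 × 𝒴) × Z, q t.1 * W t.1 t.2 * -Real.logb 2 (sideKernel q W t.1.2 t.2) =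
      condMI (fun t : 𝒳 × 𝒴 × Z => q (t.1, t.2.1) * W (t.1, t.2.1) t.2.2) +
        ∑ s, q s * H2 (W s) := by
  have marginal (y : 𝒴) : ∑ z, ∑ x, q (x, y) * W (x, y) z = ∑ x, q (x, y) := by
    rw [Finset.sum_comm]
    simp only [← Finset.mul_sum, (hW _).2, mul_one]
  rw [condMI_mul_condPmf q hW, sub_add_cancel, condH_eq_neg_sum fun t =>
    Finset.sum_nonneg fun _ _ => mul_nonneg (hq _) ((hW _).1 _)]
  simp only [marginal, sideKernel, Fintype.sum_prod_type, mul_neg, Finset.sum_neg_distrib,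
    Finset.sum_mul, neg_inj]
  rw [Finset.sum_comm_cycle]
  exact Finset.sum_congr rfl fun z _ => Finset.sum_comm

lemma sum_mul_neg_logb_sideKernel_swap {q : 𝒳 × 𝒴 → ℝ} (hq : ∀ s, 0 ≤ q s)
    {W : 𝒳 × 𝒴 → Z → ℝ} (hW : IsCondPmf W) :
    ∑ t : (𝒳 × 𝒴) × Z, q t.1 * W t.1 t.2 *
        -Real.logb 2 (sideKernel (swap q) (fun s => W s.swap) t.1.1 t.2) =
      condMI (fun t : 𝒴 × 𝒳 × Z => q (t.2.1, t.1) * W (t.2.1, t.1) t.2.2) +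
        ∑ s, q s * H2 (W s) := by
  have receiver := sum_mul_neg_logb_sideKernel (q := swap q) (fun _ => hq _)
    (W := fun s => W s.swap) fun _ => hW _
  rw [← ((Equiv.prodComm 𝒳 𝒴).prodCongr (Equiv.refl Z)).sum_comp,
    ← (Equiv.prodComm 𝒳 𝒴).sum_comp] at receiver
  exact receiver

lemma exists_rpow_le_natCast {a : ℝ} (ha : 0 ≤ a) :
    ∃ m : ℕ, 0 < m ∧ (2 : ℝ) ^ a ≤ m ∧ Real.logb 2 m ≤ 1 + a := by
  have one_le : (1 : ℝ) ≤ 2 ^ a := Real.one_le_rpow one_le_two ha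
  have ceil_pos : 0 < ⌈(2 : ℝ) ^ a⌉₊ := Nat.ceil_pos.2 (by positivity)
  refine ⟨_, ceil_pos, Nat.le_ceil _, ?_⟩
  rw [Real.logb_le_iff_le_rpow one_lt_two (by exact_mod_cast ceil_pos), Real.rpow_add two_pos,
    Real.rpow_one]
  linarith [Nat.ceil_lt_add_one (zero_le_one.trans one_le)]

lemma exists_block_code [Nonempty Z] {q : 𝒳 × 𝒴 → ℝ} (hq : IsPmf q) {W : 𝒳 × 𝒴 → Z → ℝ}
    (hW : IsCondPmf W) {K₁ : 𝒴 → Z → ℝ} {K₂ : 𝒳 → Z → ℝ} (hK₁ : ∀ y z, 0 ≤ K₁ y z)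
    (hK₂ : ∀ x z, 0 ≤ K₂ x z) (hsum₁ : ∀ y, ∑ z, K₁ y z ≤ 1) (hsum₂ : ∀ x, ∑ z, K₂ x z ≤ 1)
    {h r δ : ℝ} (hr : 0 ≤ r) (hδ : 0 ≤ δ) {n : ℕ}
    {G : Set (((Fin n → 𝒳) × (Fin n → 𝒴)) × (Fin n → Z))}
    (hGW : ∀ t ∈ G, ∏ i, W (t.1.1 i, t.1.2 i) (t.2 i) ≤ 2 ^ (-(n * (h - δ))))
    (hG₁ : ∀ t ∈ G, t.2 ∈ likelyWords K₁ (n * (h + r + δ)) t.1.2)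
    (hG₂ : ∀ t ∈ G, t.2 ∈ likelyWords K₂ (n * (h + r + δ)) t.1.1) :
    ∃ (m : ℕ) (f : (Fin n → 𝒳) × (Fin n → 𝒴) → Fin m)
      (enc : (Fin n → 𝒳) × (Fin n → 𝒴) → Fin n → Z) (dec₁ : Fin m × (Fin n → 𝒴) → Fin n → Z)
      (dec₂ : Fin m × (Fin n → 𝒳) → Fin n → Z),
      Real.logb 2 m ≤ 1 + n * (r + 4 * δ) ∧
      prob (iid q n)
          {s | (s, enc s) ∈ G ∧ dec₁ (f s, s.2) = enc s ∧ dec₂ (f s, s.1) = enc s}ᶜ ≤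
        2 * prob (fun t : ((Fin n → 𝒳) × (Fin n → 𝒴)) × (Fin n → Z) =>
          iid q n t.1 * ∏ i, W (t.1.1 i, t.1.2 i) (t.2 i)) Gᶜ + 4 * 2 ^ (-(n * δ)) := by
  obtain ⟨m, m_pos, le_m, logb_m⟩ := exists_rpow_le_natCast (a := n * (r + 4 * δ)) (by positivity)
  obtain ⟨f, enc, dec₁, dec₂, herr⟩ := exists_oneShot_code (isPmf_iid hq n)
    (V := fun s z => ∏ i, W (s.1 i, s.2 i) (z i)) (fun _ => isPmf_prod_apply fun _ => hW _)
    (by positivity) hGW (x := 2 ^ (-(n * (h - 2 * δ)))) (by positivity)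
    (likelyWords K₁ (n * (h + r + δ))) (likelyWords K₂ (n * (h + r + δ))) hG₁ hG₂
    (card_likelyWords_le hK₁ hsum₁ _) (card_likelyWords_le hK₂ hsum₂ _) m_pos
  refine ⟨m, f, enc, dec₁, dec₂, logb_m, herr.trans ?_⟩
  have covering : (2 : ℝ) ^ (-(n * (h - δ))) / 2 ^ (-(n * (h - 2 * δ))) = 2 ^ (-(n * δ)) := by
    rw [← Real.rpow_sub two_pos]
    ring_nf
  have binning : (2 : ℝ) ^ (-(n * (h - 2 * δ))) * 2 ^ (n * (h + r + δ)) / m ≤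
      2 ^ (-(n * δ)) := by
    calc _ ≤ (2 : ℝ) ^ (-(n * (h - 2 * δ))) * 2 ^ (n * (h + r + δ)) / 2 ^ (n * (r + 4 * δ)) := by
          gcongr
      _ = 2 ^ (-(n * δ)) := by
          rw [← Real.rpow_add two_pos, ← Real.rpow_sub two_pos]
          ring_nf
  rw [mul_div_assoc, covering, mul_assoc 2 (2 ^ _ : ℝ), mul_div_assoc]
  linarith

end CommonReconstruction

section CommonReconstructionRate

variable {𝒳 𝒴 Z Xh Yh κ : Type} [Fintype 𝒳] [Fintype 𝒴] [Fintype Z]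

lemma prob_piPmf_eq_prob_iid_mul_prod (q : 𝒳 × 𝒴 → ℝ) (W : 𝒳 × 𝒴 → Z → ℝ) {n : ℕ}
    (T : Set (Fin n → (𝒳 × 𝒴) × Z)) :
    prob (piPmf fun t : (𝒳 × 𝒴) × Z => q t.1 * W t.1 t.2) T =
      prob (fun t : ((Fin n → 𝒳) × (Fin n → 𝒴)) × (Fin n → Z) =>
        iid q n t.1 * ∏ i, W (t.1.1 i, t.1.2 i) (t.2 i))
        {t | (fun i => ((t.1.1 i, t.1.2 i), t.2 i)) ∈ T} := by
  let e : (Fin n → (𝒳 × 𝒴) × Z) ≃ ((Fin n → 𝒳) × (Fin n → 𝒴)) × (Fin n → Z) :=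
    (Equiv.arrowProdEquivProdArrow (Fin n) (fun _ => 𝒳 × 𝒴) fun _ => Z).trans
      ((Equiv.arrowProdEquivProdArrow (Fin n) (fun _ => 𝒳) fun _ => 𝒴).prodCongr (Equiv.refl _))
  rw [prob, prob, ← e.sum_comp]
  refine Finset.sum_congr rfl fun s _ => ?_
  have law : piPmf (fun t : (𝒳 × 𝒴) × Z => q t.1 * W t.1 t.2) s =
      iid q n (e s).1 * ∏ i, W ((e s).1.1 i, (e s).1.2 i) ((e s).2 i) :=
    Finset.prod_mul_distrib
  simp only [Set.indicator_apply, law]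
  rfl

lemma prod_le_rpow_of_sum_logb_le {ι : Type} [Fintype ι] {f : ι → ℝ} (hf : ∀ i, 0 < f i) {c : ℝ}
    (h : ∑ i, Real.logb 2 (f i) ≤ c) : ∏ i, f i ≤ 2 ^ c := by
  rw [prod_eq_two_rpow_sum_logb hf]
  exact Real.rpow_le_rpow_of_exponent_le one_le_two h

lemma sum_mul_logb_condPmf (q : 𝒳 × 𝒴 → ℝ) (W : 𝒳 × 𝒴 → Z → ℝ) :
    ∑ t : (𝒳 × 𝒴) × Z, q t.1 * W t.1 t.2 * Real.logb 2 (W t.1 t.2) = -∑ s, q s * H2 (W s) := by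
  simp only [H2, Fintype.sum_prod_type _, mul_neg, Finset.sum_neg_distrib, neg_neg, Finset.mul_sum,
    mul_assoc]

lemma tendsto_two_rpow_neg_mul {δ : ℝ} (hδ : 0 < δ) :
    Filter.Tendsto (fun n : ℕ => (2 : ℝ) ^ (-(n * δ))) Filter.atTop (nhds 0) :=
  (tendsto_rpow_atBot_of_base_gt_one 2 one_lt_two).comp
    (Filter.tendsto_neg_atTop_atBot.comp
      (tendsto_natCast_atTop_atTop.atTop_mul_const hδ))

/-- The per-letter quantities whose sums decide success of the random code: the negative
log-likelihoods of the reconstruction for the two receivers, which bound their lists, and its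
log-likelihood under the test channel, which bounds the size of the codebook. -/
def codingCosts (q : 𝒳 × 𝒴 → ℝ) (W : 𝒳 × 𝒴 → Z → ℝ) : Fin 3 → (𝒳 × 𝒴) × Z → ℝ :=
  ![fun t => -Real.logb 2 (sideKernel q W t.1.2 t.2),
    fun t => -Real.logb 2 (sideKernel (swap q) (fun s => W s.swap) t.1.1 t.2),
    fun t => Real.logb 2 (W t.1 t.2)]

lemma exists_typical_code [Nonempty Z] {q : 𝒳 × 𝒴 → ℝ} (hq : IsPmf q) {W : 𝒳 × 𝒴 → Z → ℝ}
    (hW : IsCondPmf W) (c : κ → (𝒳 × 𝒴) × Z → ℝ) {r : ℝ} (hr : 0 ≤ r)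
    (hI₁ : condMI (fun t : 𝒳 × 𝒴 × Z => q (t.1, t.2.1) * W (t.1, t.2.1) t.2.2) ≤ r)
    (hI₂ : condMI (fun t : 𝒴 × 𝒳 × Z => q (t.2.1, t.1) * W (t.2.1, t.1) t.2.2) ≤ r)
    {δ : ℝ} (hδ : 0 ≤ δ) {n : ℕ} {T : Set (Fin n → (𝒳 × 𝒴) × Z)}
    (hT : T = typical (fun t => q t.1 * W t.1 t.2) (Sum.elim (codingCosts q W) c) δ n) :
    ∃ (m : ℕ) (f : (Fin n → 𝒳) × (Fin n → 𝒴) → Fin m)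
      (enc : (Fin n → 𝒳) × (Fin n → 𝒴) → Fin n → Z) (dec₁ : Fin m × (Fin n → 𝒴) → Fin n → Z)
      (dec₂ : Fin m × (Fin n → 𝒳) → Fin n → Z),
      Real.logb 2 m ≤ 1 + n * (r + 4 * δ) ∧
      prob (iid q n) {s | (fun i => ((s.1 i, s.2 i), enc s i)) ∈ T ∧
          dec₁ (f s, s.2) = enc s ∧ dec₂ (f s, s.1) = enc s}ᶜ ≤
        2 * prob (piPmf fun t : (𝒳 × 𝒴) × Z => q t.1 * W t.1 t.2) Tᶜ + 4 * 2 ^ (-(n * δ)) := by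
  have mean₁ := sum_mul_neg_logb_sideKernel hq.1 hW
  have mean₂ := sum_mul_neg_logb_sideKernel_swap hq.1 hW
  rw [prob_piPmf_eq_prob_iid_mul_prod q W]
  refine exists_block_code hq hW (h := ∑ s, q s * H2 (W s)) (K₁ := sideKernel q W)
    (K₂ := sideKernel (swap q) fun s => W s.swap)
    (G := {t | (fun i => ((t.1.1 i, t.1.2 i), t.2 i)) ∈ T})
    (sideKernel_nonneg hq.1 hW) (sideKernel_nonneg (fun _ => hq.1 _) fun _ => hW _)
    (sum_sideKernel_le_one q hW) (sum_sideKernel_le_one _ fun _ => hW _) hr hδ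
    (fun t ht => ?_) (fun t ht => ?_) fun t ht => ?_
  all_goals obtain ⟨support, costs_le⟩ := hT ▸ ht
  · refine prod_le_rpow_of_sum_logb_le
      (fun i => ((hW _).1 _).lt_of_ne' (right_ne_zero_of_mul (support i)))
      ((costs_le (.inl 2)).trans_eq ?_)
    simp only [Sum.elim_inl, codingCosts, Matrix.cons_val, sum_mul_logb_condPmf]
    ring
  · refine mem_likelyWords_of_sum_neg_logb_le (fun i => sideKernel_pos hq.1 hW (support i))
      ((costs_le (.inl 0)).trans (mul_le_mul_of_nonneg_left ?_ n.cast_nonneg))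
    simp only [Sum.elim_inl, codingCosts, Matrix.cons_val, mean₁]
    linarith
  · refine mem_likelyWords_of_sum_neg_logb_le (fun i => sideKernel_pos (q := swap q)
        (fun _ => hq.1 _) (W := fun s => W s.swap) (fun _ => hW _) (s := (t.1.2 i, t.1.1 i))
        (support i))
      ((costs_le (.inl 1)).trans (mul_le_mul_of_nonneg_left ?_ n.cast_nonneg))
    simp only [Sum.elim_inl, codingCosts, Matrix.cons_val, mean₂]
    linarith

lemma eventually_exists_block_code [Nonempty Z] [Finite κ] {q : 𝒳 × 𝒴 → ℝ} (hq : IsPmf q)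
    {W : 𝒳 × 𝒴 → Z → ℝ} (hW : IsCondPmf W) {c : κ → (𝒳 × 𝒴) × Z → ℝ} {d : κ → ℝ}
    (hd : ∀ k, ∑ t : (𝒳 × 𝒴) × Z, q t.1 * W t.1 t.2 * c k t ≤ d k) {r : ℝ} (hr : 0 ≤ r)
    (hI₁ : condMI (fun t : 𝒳 × 𝒴 × Z => q (t.1, t.2.1) * W (t.1, t.2.1) t.2.2) ≤ r)
    (hI₂ : condMI (fun t : 𝒴 × 𝒳 × Z => q (t.2.1, t.1) * W (t.2.1, t.1) t.2.2) ≤ r)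
    {δ η : ℝ} (hδ : 0 < δ) (hη : 0 < η) :
    ∀ᶠ n : ℕ in Filter.atTop, ∃ (m : ℕ) (f : (Fin n → 𝒳) × (Fin n → 𝒴) → Fin m)
      (enc : (Fin n → 𝒳) × (Fin n → 𝒴) → Fin n → Z) (dec₁ : Fin m × (Fin n → 𝒴) → Fin n → Z)
      (dec₂ : Fin m × (Fin n → 𝒳) → Fin n → Z),
      Real.logb 2 m ≤ 1 + n * (r + 4 * δ) ∧
      prob (iid q n) {s | (∀ k, ∑ i, c k ((s.1 i, s.2 i), enc s i) ≤ n * (d k + δ)) ∧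
        dec₁ (f s, s.2) = enc s ∧ dec₂ (f s, s.1) = enc s}ᶜ ≤ η := by
  have error_tendsto := ((tendsto_prob_compl_typical (isPmf_mul_condPmf hq hW)
    (Sum.elim (codingCosts q W) c) hδ).const_mul 2).add ((tendsto_two_rpow_neg_mul hδ).const_mul 4)
  rw [mul_zero, mul_zero, add_zero] at error_tendsto
  filter_upwards [error_tendsto.eventually_le_const hη] with n error_le
  obtain ⟨m, f, enc, dec₁, dec₂, rate_le, block_error_le⟩ :=
    exists_typical_code hq hW c hr hI₁ hI₂ hδ.le rfl
  refine ⟨m, f, enc, dec₁, dec₂, rate_le, (prob_mono (isPmf_iid hq n).1 ?_).trans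
    (block_error_le.trans error_le)⟩
  refine Set.compl_subset_compl.2 fun s hs => ⟨fun k => (hs.1.2 (.inr k)).trans ?_, hs.2⟩
  gcongr
  exact hd k

lemma expected_block_cost_le {Ω : Type} [Fintype Ω] {P : Ω → ℝ} (hP : IsPmf P) {n : ℕ} (hn : 0 < n)
    {c : Ω → Fin n → ℝ} {E : Set Ω} {d D : ℝ} (hE : ∀ s ∈ E, ∑ i, c s i ≤ n * d)
    (hc : ∀ s i, c s i ≤ d + D) :
    ∑ s, P s * ((n : ℝ)⁻¹ * ∑ i, c s i) ≤ d + D * prob P Eᶜ := by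
  have n_pos : (0 : ℝ) < n := by exact_mod_cast hn
  refine sum_mul_le_add_mul_prob_compl hP (fun s hs => ?_) fun s => ?_ <;>
    rw [inv_mul_le_iff₀ n_pos]
  · exact hE s hs
  · exact (Finset.sum_le_card_nsmul _ _ _ fun i _ => hc s i).trans_eq (by simp [mul_add])

lemma sum_ite_eq_zero_le_prob_compl {Ω A : Type} [Fintype Ω] [DecidableEq A] {P : Ω → ℝ}
    (hP : ∀ s, 0 ≤ P s) {E : Set Ω} {g₁ g₂ : Ω → A} (h : ∀ s ∈ E, g₁ s = g₂ s) :
    (∑ s, if g₁ s = g₂ s then 0 else P s) ≤ prob P Eᶜ := by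
  rw [sum_ite_zero_eq_prob_compl]
  exact prob_mono hP (Set.compl_subset_compl.2 h)

lemma exists_nonneg_forall_le {ι : Type} [Finite ι] (f : ι → ℝ) : ∃ D, 0 ≤ D ∧ ∀ i, f i ≤ D := by
  obtain ⟨B, hB⟩ := (Set.finite_range f).bddAbove
  exact ⟨max B 0, le_max_right _ _, fun i => (hB ⟨i, rfl⟩).trans (le_max_left _ _)⟩

lemma add_mul_le_of_le_div_one_add {e D b : ℝ} (hD : 0 ≤ D) (h : e ≤ b / (1 + D)) :
    e + D * e ≤ b := by
  rw [le_div_iff₀ (by positivity)] at h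
  linarith

theorem crAchievable_of_condMI_le [Nonempty Z] {q : 𝒳 × 𝒴 → ℝ} (hq : IsPmf q)
    {W : 𝒳 × 𝒴 → Z → ℝ} (hW : IsCondPmf W) {δ1 : 𝒳 → Xh → ℝ} {δ2 : 𝒴 → Yh → ℝ} (u : Z → Xh)
    (v : Z → Yh) {d1 d2 r : ℝ}
    (hd1 : ∑ t : (𝒳 × 𝒴) × Z, q t.1 * W t.1 t.2 * δ1 t.1.1 (u t.2) ≤ d1)
    (hd2 : ∑ t : (𝒳 × 𝒴) × Z, q t.1 * W t.1 t.2 * δ2 t.1.2 (v t.2) ≤ d2) (hr : 0 ≤ r)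
    (hI₁ : condMI (fun t : 𝒳 × 𝒴 × Z => q (t.1, t.2.1) * W (t.1, t.2.1) t.2.2) ≤ r)
    (hI₂ : condMI (fun t : 𝒴 × 𝒳 × Z => q (t.2.1, t.1) * W (t.2.1, t.1) t.2.2) ≤ r) :
    CRAchievable q δ1 δ2 d1 d2 r := by
  intro ε hε
  let c : Bool → (𝒳 × 𝒴) × Z → ℝ := fun k t => bif k then δ2 t.1.2 (v t.2) else δ1 t.1.1 (u t.2)
  let d : Bool → ℝ := fun k => bif k then d2 else d1
  obtain ⟨D, D_nonneg, hD⟩ := exists_nonneg_forall_le fun kt : Bool × ((𝒳 × 𝒴) × Z) =>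
    c kt.1 kt.2 - d kt.1
  obtain ⟨n, ⟨m, f, enc, dec₁, dec₂, rate_le, error_le⟩, n_large⟩ :=
    ((eventually_exists_block_code hq hW (c := c) (d := d) (Bool.forall_bool.2 ⟨hd1, hd2⟩) hr
      hI₁ hI₂ (δ := ε / 8) (η := ε / 2 / (1 + D)) (by positivity) (by positivity)).and
      (Filter.eventually_gt_atTop ⌈2 / ε⌉₊)).exists
  have n_pos : (0 : ℝ) < n := by exact_mod_cast n_large.pos
  have two_le : 2 ≤ n * ε := (div_le_iff₀ hε).1 ((Nat.le_ceil _).trans (by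
    exact_mod_cast n_large.le))
  set E := {s : (Fin n → 𝒳) × (Fin n → 𝒴) |
    (∀ k, ∑ i, c k ((s.1 i, s.2 i), enc s i) ≤ n * (d k + ε / 8)) ∧
      dec₁ (f s, s.2) = enc s ∧ dec₂ (f s, s.1) = enc s}
  have error_nonneg : 0 ≤ prob (iid q n) Eᶜ := prob_nonneg (isPmf_iid hq n).1 _
  have error_budget : prob (iid q n) Eᶜ + D * prob (iid q n) Eᶜ ≤ ε / 2 :=
    add_mul_le_of_le_div_one_add D_nonneg error_le
  have penalty_nonneg := mul_nonneg D_nonneg error_nonneg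
  have distortion_le (k : Bool) (z : (Fin n → 𝒳) × (Fin n → 𝒴) → Fin n → Z)
      (hz : ∀ s ∈ E, z s = enc s) :
      ∑ s, iid q n s * ((n : ℝ)⁻¹ * ∑ i, c k ((s.1 i, s.2 i), z s i)) ≤ d k + ε := by
    refine (expected_block_cost_le (isPmf_iid hq n) n_large.pos (E := E)
      (fun s hs => hz s hs ▸ hs.1 k) fun s i => (?_ : _ ≤ d k + ε / 8 + D)).trans ?_
    · linarith [hD (k, ((s.1 i, s.2 i), z s i))]
    · linarith
  refine ⟨n, m, f, fun jy => u ∘ dec₁ jy, fun jx => v ∘ dec₂ jx, fun jy => v ∘ dec₁ jy,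
    fun jx => u ∘ dec₂ jx, n_large.pos, ?_, distortion_le false _ fun s hs => hs.2.1,
    distortion_le true _ fun s hs => hs.2.2,
    (sum_ite_eq_zero_le_prob_compl (isPmf_iid hq n).1 fun s hs => ?_).trans
      (by linarith : prob (iid q n) Eᶜ ≤ ε),
    (sum_ite_eq_zero_le_prob_compl (isPmf_iid hq n).1 fun s hs => ?_).trans
      (by linarith : prob (iid q n) Eᶜ ≤ ε)⟩
  · rw [div_le_iff₀ n_pos]
    linarith
  · exact congrArg (u ∘ ·) (hs.2.2.trans hs.2.1.symm)
  · exact congrArg (v ∘ ·) (hs.2.1.trans hs.2.2.symm)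

end CommonReconstructionRate

section WynerInequality

/-- `artanh s / s` is nondecreasing, by its power series. -/
lemma mul_log_sub_log_le {s t : ℝ} (hs : 0 ≤ s) (hst : s ≤ t) (ht : t < 1) :
    t * (Real.log (1 + s) - Real.log (1 - s)) ≤ s * (Real.log (1 + t) - Real.log (1 - t)) := by
  have ht0 := hs.trans hst
  have series_s := Real.hasSum_log_sub_log_of_abs_lt_one (abs_lt.2 ⟨by linarith, hst.trans_lt ht⟩)
  have series_t := Real.hasSum_log_sub_log_of_abs_lt_one (abs_lt.2 ⟨by linarith, ht⟩)
  refine hasSum_le (fun k => ?_) (series_s.mul_left t) (series_t.mul_left s)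
  calc t * (2 * (1 / (2 * k + 1)) * s ^ (2 * k + 1))
      = 2 * (1 / (2 * k + 1)) * (s * t) * s ^ (2 * k) := by ring
    _ ≤ 2 * (1 / (2 * k + 1)) * (s * t) * t ^ (2 * k) := by gcongr
    _ = s * (2 * (1 / (2 * k + 1)) * t ^ (2 * k + 1)) := by ring

/-- The entropy in nats of a bit as a function of the square `u` of its bias. It is concave in `u`,
and AM-GM bounds the product of the biases of two bits by the mean of their squares. -/
def entropyOfSqBias (u : ℝ) : ℝ :=
  Real.binEntropy ((1 + √u) / 2)

lemma binEntropy_eq_entropyOfSqBias (a : ℝ) :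
    Real.binEntropy a = entropyOfSqBias ((1 - 2 * a) ^ 2) := by
  rw [entropyOfSqBias, Real.sqrt_sq_eq_abs]
  rcases abs_choice (1 - 2 * a) with h | h <;> rw [h]
  · rw [← Real.binEntropy_one_sub]
    ring_nf
  · ring_nf

lemma hasDerivAt_entropyOfSqBias {u : ℝ} (hu : u ∈ Set.Ioo (0 : ℝ) 1) :
    HasDerivAt entropyOfSqBias (-((Real.log (1 + √u) - Real.log (1 - √u)) / (4 * √u))) u := by
  have hs : 0 < √u := Real.sqrt_pos.2 hu.1
  have hs1 : √u < 1 := (Real.sqrt_lt' one_pos).2 (by simpa using hu.2)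
  have inner := ((Real.hasDerivAt_sqrt hu.1.ne').const_add 1).div_const 2
  refine ((Real.hasDerivAt_binEntropy (p := (1 + √u) / 2) (by linarith) (by linarith)).comp u
    inner).congr_deriv ?_
  rw [show 1 - (1 + √u) / 2 = (1 - √u) / 2 by ring, Real.log_div (by linarith) two_ne_zero,
    Real.log_div (by linarith) two_ne_zero]
  field_simp
  ring

lemma concaveOn_entropyOfSqBias : ConcaveOn ℝ (Set.Icc 0 1) entropyOfSqBias := by
  have hcont : Continuous entropyOfSqBias := by unfold entropyOfSqBias; fun_prop
  refine AntitoneOn.concaveOn_of_deriv (convex_Icc _ _) hcont.continuousOn ?_ ?_ <;>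
    rw [interior_Icc]
  · exact fun u hu => (hasDerivAt_entropyOfSqBias hu).differentiableAt.differentiableWithinAt
  · intro u hu v hv huv
    rw [(hasDerivAt_entropyOfSqBias hu).deriv, (hasDerivAt_entropyOfSqBias hv).deriv,
      neg_le_neg_iff, div_le_div_iff₀ (by have := Real.sqrt_pos.2 hu.1; positivity)
        (by have := Real.sqrt_pos.2 hv.1; positivity)]
    linarith [mul_log_sub_log_le (Real.sqrt_nonneg u) (Real.sqrt_le_sqrt huv)
      ((Real.sqrt_lt' one_pos).2 (by simpa using hv.2))]

lemma antitoneOn_entropyOfSqBias : AntitoneOn entropyOfSqBias (Set.Icc 0 1) := by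
  intro u _ v hv huv
  have hv1 : √v ≤ 1 := Real.sqrt_le_one.2 hv.2
  have huv' := Real.sqrt_le_sqrt huv
  have hu0 := Real.sqrt_nonneg u
  exact Real.binEntropy_strictAntiOn.antitoneOn ⟨by linarith, by linarith⟩
    ⟨by linarith, by linarith⟩ (by linarith)

lemma sq_bias_mem_Icc {x : ℝ} (hx : x ∈ Set.Icc (0 : ℝ) 1) :
    (1 - 2 * x) ^ 2 ∈ Set.Icc (0 : ℝ) 1 :=
  ⟨sq_nonneg _, by nlinarith [mul_nonneg hx.1 (sub_nonneg.2 hx.2)]⟩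

lemma binEntropy_add_le {x y : ℝ} (hx : x ∈ Set.Icc (0 : ℝ) 1) (hy : y ∈ Set.Icc (0 : ℝ) 1) :
    Real.binEntropy x + Real.binEntropy y ≤
      2 * entropyOfSqBias (((1 - 2 * x) ^ 2 + (1 - 2 * y) ^ 2) / 2) := by
  have midpoint := concaveOn_entropyOfSqBias.right (sq_bias_mem_Icc hx) (sq_bias_mem_Icc hy)
    one_half_pos.le one_half_pos.le (add_halves 1)
  simp only [smul_eq_mul, one_div_mul_eq_div, ← add_div, ← binEntropy_eq_entropyOfSqBias]
    at midpoint
  linarith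

lemma sum_mul_binEnt_add_le {ι : Type} [Fintype ι] {p : ι → ℝ} (hp : IsPmf p) {α β : ι → ℝ}
    (hα : ∀ i, α i ∈ Set.Icc (0 : ℝ) 1) (hβ : ∀ i, β i ∈ Set.Icc (0 : ℝ) 1) {a : ℝ}
    (h : (1 - 2 * a) ^ 2 ≤ ∑ i, p i * ((1 - 2 * α i) * (1 - 2 * β i))) :
    ∑ i, p i * (binEnt (α i) + binEnt (β i)) ≤ 2 * binEnt a := by
  set u : ι → ℝ := fun i => ((1 - 2 * α i) ^ 2 + (1 - 2 * β i) ^ 2) / 2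
  have u_mem (i : ι) : u i ∈ Set.Icc (0 : ℝ) 1 := by
    obtain ⟨hα0, hα1⟩ := sq_bias_mem_Icc (hα i)
    obtain ⟨hβ0, hβ1⟩ := sq_bias_mem_Icc (hβ i)
    constructor <;> simp only [u] <;> linarith
  have mean_mem : ∑ i, p i * u i ∈ Set.Icc (0 : ℝ) 1 :=
    (convex_Icc (0 : ℝ) 1).sum_mem (fun i _ => hp.1 i) hp.2 fun i _ => u_mem i
  have correlation_le : (1 - 2 * a) ^ 2 ≤ ∑ i, p i * u i :=
    h.trans <| Finset.sum_le_sum fun i _ => mul_le_mul_of_nonneg_left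
      (by simp only [u]; linarith [sq_nonneg ((1 - 2 * α i) - (1 - 2 * β i))]) (hp.1 i)
  simp only [binEnt_eq_binEntropy_div, ← add_div, ← mul_div_assoc, ← Finset.sum_div]
  gcongr
  calc ∑ i, p i * (Real.binEntropy (α i) + Real.binEntropy (β i))
      ≤ ∑ i, p i * (2 * entropyOfSqBias (u i)) := Finset.sum_le_sum fun i _ =>
        mul_le_mul_of_nonneg_left (binEntropy_add_le (hα i) (hβ i)) (hp.1 i)
    _ = 2 * ∑ i, p i * entropyOfSqBias (u i) := by
        simp only [mul_left_comm _ (2 : ℝ), Finset.mul_sum]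
    _ ≤ 2 * entropyOfSqBias (∑ i, p i * u i) := by
        gcongr
        exact concaveOn_entropyOfSqBias.le_map_sum (fun i _ => hp.1 i) hp.2 fun i _ => u_mem i
    _ ≤ 2 * entropyOfSqBias ((1 - 2 * a) ^ 2) := by
        gcongr
        exact antitoneOn_entropyOfSqBias ⟨sq_nonneg _, correlation_le.trans mean_mem.2⟩ mean_mem
          correlation_le
    _ = 2 * Real.binEntropy a := by rw [binEntropy_eq_entropyOfSqBias]

end WynerInequality

section Disintegration

variable {α β γ : Type} [Fintype α] [Fintype β] [Fintype γ]

omit [Fintype α] in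
lemma exists_condPmf_eq_mul [Nonempty β] {p : α → β → ℝ} (hp : ∀ a b, 0 ≤ p a b) :
    ∃ W : α → β → ℝ, IsCondPmf W ∧ ∀ a b, p a b = (∑ b', p a b') * W a b := by
  obtain ⟨b₀⟩ := ‹Nonempty β›
  have row (a : α) : ∃ w : β → ℝ, IsPmf w ∧ ∀ b, p a b = (∑ b', p a b') * w b := by
    rcases eq_or_ne (∑ b, p a b) 0 with h | h
    · refine ⟨Pi.single b₀ 1, ⟨fun b => by rw [Pi.single_apply]; positivity, by simp⟩, fun b => ?_⟩
      rw [h, zero_mul]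
      exact (Finset.sum_eq_zero_iff_of_nonneg fun b _ => hp a b).1 h b (Finset.mem_univ b)
    · exact ⟨fun b => p a b / ∑ b', p a b', ⟨fun b => div_nonneg (hp a b)
        (Finset.sum_nonneg fun b _ => hp a b), by rw [← Finset.sum_div, div_self h]⟩,
        fun b => by field_simp⟩
  choose W hW hpW using row
  exact ⟨W, hW, hpW⟩

lemma Markov.exists_factorization [Nonempty α] [Nonempty γ] {p : α × β × γ → ℝ} (h : Markov p)
    (hp : ∀ t, 0 ≤ p t) :
    ∃ (A : β → α → ℝ) (B : β → γ → ℝ), IsCondPmf A ∧ IsCondPmf B ∧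
      ∀ a b c, p (a, b, c) = (∑ a', ∑ c', p (a', b, c')) * (A b a * B b c) := by
  obtain ⟨A, hA, hpA⟩ := exists_condPmf_eq_mul (p := fun b a => ∑ c, p (a, b, c))
    fun b a => Finset.sum_nonneg fun c _ => hp _
  obtain ⟨B, hB, hpB⟩ := exists_condPmf_eq_mul (p := fun b c => ∑ a, p (a, b, c))
    fun b c => Finset.sum_nonneg fun a _ => hp _
  refine ⟨A, B, hA, hB, fun a b c => ?_⟩
  have markov := h a b c
  rw [hpA, hpB, Finset.sum_comm (f := fun c' a' => p (a', b, c'))] at markov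
  rcases eq_or_ne (∑ a', ∑ c', p (a', b, c')) 0 with hb | hb
  · have : p (a, b, c) ≤ 0 := hb ▸
      (Finset.single_le_sum (f := fun c' => p (a, b, c')) (fun _ _ => hp _)
        (Finset.mem_univ c)).trans
      (Finset.single_le_sum (f := fun a' => ∑ c', p (a', b, c'))
        (fun _ _ => Finset.sum_nonneg fun _ _ => hp _) (Finset.mem_univ a))
    rw [hb, zero_mul]
    exact this.antisymm (hp _)
  · exact mul_right_cancel₀ hb (by linear_combination markov)

end Disintegration

section ConditionalIndependence

variable {α β γ : Type} [Fintype α] [Fintype β] [Fintype γ]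

lemma MI_condIndep (μ : γ → ℝ) {A : γ → α → ℝ} {B : γ → β → ℝ} (hA : IsCondPmf A)
    (hB : IsCondPmf B) :
    MI (fun t : (α × β) × γ => μ t.2 * (A t.2 t.1.1 * B t.2 t.1.2)) =
      H2 (fun s : α × β => ∑ c, μ c * (A c s.1 * B c s.2)) -
        ∑ c, μ c * (H2 (A c) + H2 (B c)) := by
  have marginal (c : γ) : ∑ s : α × β, μ c * (A c s.1 * B c s.2) = μ c := by
    rw [← Finset.mul_sum, (isPmf_mul_condPmf (hA c) (W := fun _ => B c) fun _ => hB c).2, mul_one]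
  simp only [MI, marginal, H2_condIndep μ hA hB]
  ring

lemma condMI_condIndep (μ : γ → ℝ) {A : γ → α → ℝ} {B : γ → β → ℝ} (hA : IsCondPmf A)
    (hB : IsCondPmf B) :
    condMI (fun t : α × β × γ => μ t.2.2 * (A t.2.2 t.1 * B t.2.2 t.2.1)) =
      condH (fun s : α × β => ∑ c, μ c * (A c s.1 * B c s.2)) - ∑ c, μ c * H2 (A c) := by
  have joint := (H2_comp_equiv (Equiv.prodAssoc α β γ)
    fun t => μ t.2.2 * (A t.2.2 t.1 * B t.2.2 t.2.1)).symm.trans (H2_condIndep μ hA hB)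
  have pair : H2 (fun t : β × γ => ∑ a, μ t.2 * (A t.2 a * B t.2 t.1)) =
      H2 μ + ∑ c, μ c * H2 (B c) := by
    simp only [← Finset.mul_sum, ← Finset.sum_mul, (hA _).2, one_mul]
    rw [← H2_comp_equiv (Equiv.prodComm γ β)]
    exact H2_chain_rule μ hB
  rw [condMI, joint, pair, condH]
  simp only [mul_add, Finset.sum_add_distrib]
  ring

lemma sum_condIndep_mul_fst (μ : γ → ℝ) {A : γ → α → ℝ} {B : γ → β → ℝ} (hB : IsCondPmf B)
    (φ : α → γ → ℝ) :
    ∑ t : (α × β) × γ, μ t.2 * (A t.2 t.1.1 * B t.2 t.1.2) * φ t.1.1 t.2 =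
      ∑ c, μ c * ∑ a, A c a * φ a c := by
  rw [Fintype.sum_prod_type_right]
  refine Finset.sum_congr rfl fun c _ => ?_
  simp only [Fintype.sum_prod_type, mul_assoc, mul_left_comm _ (B c _), ← Finset.mul_sum,
    ← Finset.sum_mul, (hB c).2, one_mul]

lemma sum_condIndep_mul_snd (μ : γ → ℝ) {A : γ → α → ℝ} {B : γ → β → ℝ} (hA : IsCondPmf A)
    (φ : β → γ → ℝ) :
    ∑ t : (α × β) × γ, μ t.2 * (A t.2 t.1.1 * B t.2 t.1.2) * φ t.1.2 t.2 =
      ∑ c, μ c * ∑ b, B c b * φ b c := by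
  rw [Fintype.sum_prod_type_right]
  refine Finset.sum_congr rfl fun c _ => ?_
  simp only [Fintype.sum_prod_type, mul_assoc, ← Finset.mul_sum, ← Finset.sum_mul, (hA c).2,
    one_mul]

end ConditionalIndependence

lemma le_MI_of_markov {ι : Type} [Fintype ι] {q : Bool × Bool → ℝ} (hq : IsPmf q)
    {W : Bool × Bool → ι → ℝ} (hW : IsCondPmf W)
    (hM : Markov fun t : Bool × ι × Bool => q (t.1, t.2.2) * W (t.1, t.2.2) t.2.1) {a : ℝ}
    (ha : (1 - 2 * a) ^ 2 ≤
      q (true, true) + q (false, false) - q (true, false) - q (false, true)) :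
    H2 q - 2 * binEnt a ≤ MI fun t : (Bool × Bool) × ι => q t.1 * W t.1 t.2 := by
  obtain ⟨A, B, hA, hB, hAB⟩ := hM.exists_factorization fun t => mul_nonneg (hq.1 _) ((hW _).1 _)
  set μ : ι → ℝ := fun w => ∑ s, q s * W s w
  have hμ : IsPmf μ := isPmf_sum_fst (isPmf_mul_condPmf hq hW)
  have joint (x y : Bool) (w : ι) : q (x, y) * W (x, y) w = μ w * (A w x * B w y) := by
    simpa only [μ, Fintype.sum_prod_type] using hAB x w y
  have marginal (x y : Bool) : ∑ w, μ w * (A w x * B w y) = q (x, y) := by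
    simp only [← joint, ← Finset.mul_sum, (hW _).2, mul_one]
  have bias {C : ι → Bool → ℝ} (hC : IsCondPmf C) (w : ι) :
      1 - 2 * C w true = C w false - C w true := by
    have := (hC w).2
    rw [Fintype.sum_bool] at this
    linarith
  have correlation : ∑ w, μ w * ((1 - 2 * A w true) * (1 - 2 * B w true)) =
      q (true, true) + q (false, false) - q (true, false) - q (false, true) := by
    simp only [← marginal, ← Finset.sum_add_distrib, ← Finset.sum_sub_distrib, bias hA, bias hB]
    exact Finset.sum_congr rfl fun w _ => by ring
  have wyner := sum_mul_binEnt_add_le hμ (fun w => (hA w).mem_Icc true)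
    (fun w => (hB w).mem_Icc true) (correlation ▸ ha)
  have information := MI_condIndep μ hA hB
  simp only [← joint, H2_bool (hA _).2, H2_bool (hB _).2] at information
  simp only [joint, marginal] at information ⊢
  linarith

section BinarySymmetric

lemma Icc_zero_half_subset_Icc_zero_one : Set.Icc (0 : ℝ) (1 / 2) ⊆ Set.Icc 0 1 :=
  Set.Icc_subset_Icc_right one_half_lt_one.le

/-- The transition probabilities of the binary symmetric channel with crossover probability `a`; it
is the optimal test channel between the common reconstruction and either source. -/
def bsc (a : ℝ) (x y : Bool) : ℝ :=
  if x = y then 1 - a else a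

lemma bsc_comm (a : ℝ) (x y : Bool) : bsc a x y = bsc a y x := by
  simp only [bsc, eq_comm]

lemma isCondPmf_bsc {a : ℝ} (ha : a ∈ Set.Icc (0 : ℝ) 1) : IsCondPmf (bsc a) := by
  refine fun x => ⟨fun y => ?_, by cases x <;> simp [bsc]⟩
  unfold bsc
  split_ifs
  exacts [sub_nonneg.2 ha.2, ha.1]

lemma bsc_pos {a : ℝ} (h0 : 0 < a) (h1 : a < 1) (x y : Bool) : 0 < bsc a x y := by
  unfold bsc
  split_ifs
  exacts [sub_pos.2 h1, h0]

lemma H2_bsc (a : ℝ) (x : Bool) : H2 (bsc a x) = binEnt a := by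
  cases x <;> simp [H2, bsc, binEnt] <;> ring

lemma logb_bsc (a : ℝ) (x y : Bool) :
    Real.logb 2 (bsc a x y) =
      Real.logb 2 (1 - a) - (Real.logb 2 (1 - a) - Real.logb 2 a) * dHam x y := by
  unfold bsc dHam
  split_ifs <;> ring

lemma sum_bsc_mul_dHam (a : ℝ) (w : Bool) : ∑ x, bsc a w x * dHam x w = a := by
  cases w <;> simp [bsc, dHam]

lemma binEnt_eq_logb_sub (a : ℝ) :
    binEnt a = (Real.logb 2 (1 - a) - Real.logb 2 a) * a - Real.logb 2 (1 - a) := by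
  unfold binEnt
  ring

lemma logb_one_sub_sub_logb_nonneg {a : ℝ} (h0 : 0 < a) (h : a ≤ 1 / 2) :
    0 ≤ Real.logb 2 (1 - a) - Real.logb 2 a :=
  sub_nonneg.2 (Real.logb_le_logb_of_le one_lt_two h0 (by linarith))

lemma condH_le_binEnt {p : Bool × Bool → ℝ} (hp : IsPmf p) {a : ℝ}
    (ha : a ∈ Set.Icc (0 : ℝ) (1 / 2)) (h : ∑ t, p t * dHam t.1 t.2 ≤ a) : condH p ≤ binEnt a := by
  have ha1 := Icc_zero_half_subset_Icc_zero_one ha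
  have support (t : Bool × Bool) (ht : bsc a t.2 t.1 = 0) : p t = 0 := by
    have term_le := Finset.single_le_sum (f := fun s => p s * dHam s.1 s.2) (fun s _ =>
      mul_nonneg (hp.1 s) (by unfold dHam; positivity)) (Finset.mem_univ t)
    rw [bsc_comm] at ht
    by_cases hxy : t.1 = t.2
    · rw [bsc, if_pos hxy] at ht
      linarith [ha.2]
    · rw [bsc, if_neg hxy] at ht
      simp only [dHam, if_neg hxy, mul_one] at term_le h
      exact (term_le.trans (h.trans ht.le)).antisymm (hp.1 t)
  refine (condH_le_neg_sum_mul_logb hp.1 (isCondPmf_bsc ha1) support).trans ?_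
  have expand : ∑ t, p t * Real.logb 2 (bsc a t.2 t.1) = Real.logb 2 (1 - a) -
      (Real.logb 2 (1 - a) - Real.logb 2 a) * ∑ t, p t * dHam t.1 t.2 := by
    simp only [bsc_comm a (Prod.snd _), logb_bsc, mul_sub, Finset.sum_sub_distrib,
      ← Finset.sum_mul, hp.2, one_mul, Finset.mul_sum, mul_left_comm]
  rw [expand, binEnt_eq_logb_sub, neg_sub]
  rcases ha.1.eq_or_lt with h0 | h0
  · simp [← h0]
  · gcongr
    exact logb_one_sub_sub_logb_nonneg h0 ha.2

lemma isPmf_one_half : IsPmf fun _ : Bool => (1 / 2 : ℝ) :=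
  ⟨fun _ => one_half_pos.le, by norm_num⟩

lemma H2_one_half : H2 (fun _ : Bool => (1 / 2 : ℝ)) = 1 := by
  simp [H2]

lemma margX_dsbs (ρ : ℝ) : margX (dsbs ρ) = fun _ => 1 / 2 := by
  funext x
  cases x <;> simp [margX, dsbs] <;> ring

lemma margY_dsbs (ρ : ℝ) : margY (dsbs ρ) = fun _ => 1 / 2 := by
  funext y
  cases y <;> simp [margY, dsbs] <;> ring

lemma dsbs_eq_mul_bsc (ρ : ℝ) : dsbs ρ = fun t => 1 / 2 * bsc ρ t.1 t.2 := by
  funext t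
  unfold dsbs bsc
  split_ifs <;> ring

lemma isPmf_dsbs {ρ : ℝ} (hρ : ρ ∈ Set.Icc (0 : ℝ) 1) : IsPmf (dsbs ρ) :=
  dsbs_eq_mul_bsc ρ ▸ isPmf_mul_condPmf isPmf_one_half (isCondPmf_bsc hρ)

lemma H2_dsbs {ρ : ℝ} (hρ : ρ ∈ Set.Icc (0 : ℝ) 1) : H2 (dsbs ρ) = 1 + binEnt ρ := by
  rw [dsbs_eq_mul_bsc, H2_chain_rule (fun _ => 1 / 2) (isCondPmf_bsc hρ), H2_one_half]
  simp [H2_bsc]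

lemma condH_dsbs {ρ : ℝ} (hρ : ρ ∈ Set.Icc (0 : ℝ) 1) : condH (dsbs ρ) = binEnt ρ := by
  have marginal : H2 (fun y => ∑ x, dsbs ρ (x, y)) = 1 :=
    (congrArg H2 (margY_dsbs ρ)).trans H2_one_half
  rw [condH, H2_dsbs hρ, marginal, add_sub_cancel_left]

lemma margRD_one_half {a : ℝ} (ha : a ∈ Set.Icc (0 : ℝ) (1 / 2)) :
    margRD (fun _ : Bool => (1 / 2 : ℝ)) (dHam (α := Bool)) a = 1 - binEnt a := by
  have ha1 := Icc_zero_half_subset_Icc_zero_one ha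
  have MI_eq {W : Bool → Bool → ℝ} (hW : IsCondPmf W) :
      MI (fun t : Bool × Bool => 1 / 2 * W t.1 t.2) =
        1 - condH fun t : Bool × Bool => 1 / 2 * W t.1 t.2 := by
    simp only [MI, condH, ← Finset.mul_sum, (hW _).2, mul_one, H2_one_half]
    ring
  refine IsLeast.csInf_eq ⟨⟨bsc a, isCondPmf_bsc ha1, ?_, ?_⟩, ?_⟩
  · simp only [mul_assoc, ← Finset.mul_sum]
    simp [bsc, dHam, ← two_mul]
  · rw [MI_eq (isCondPmf_bsc ha1), ← dsbs_eq_mul_bsc, condH_dsbs ha1]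
  · rintro r ⟨W, hW, hd, rfl⟩
    rw [MI_eq hW]
    have fano := condH_le_binEnt (isPmf_mul_condPmf isPmf_one_half hW) ha
      (by rwa [Fintype.sum_prod_type])
    linarith

/-- The bit carried by the optimal common reconstruction, which is encoded in an alphabet of four
letters so that it is admissible in `wynerK`. -/
def lowBit (w : Fin 4) : Bool :=
  w.val.bodd

lemma sum_lowBit (f : Bool → ℝ) : ∑ w, 1 / 4 * f (lowBit w) = 1 / 2 * ∑ b, f b := by
  rw [Fin.sum_univ_four, Fintype.sum_bool]
  simp [lowBit]
  ring

lemma sum_bsc_mul_bsc (a : ℝ) (x y : Bool) :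
    ∑ w, 1 / 4 * (bsc a (lowBit w) x * bsc a (lowBit w) y) = dsbs (2 * a * (1 - a)) (x, y) := by
  rw [sum_lowBit fun b => bsc a b x * bsc a b y]
  cases x <;> cases y <;> simp [bsc, dsbs] <;> ring

lemma exists_wyner_channel {a : ℝ} (ha : a ∈ Set.Icc (0 : ℝ) 1) :
    ∃ W : Bool × Bool → Fin 4 → ℝ, IsCondPmf W ∧ ∀ s w, dsbs (2 * a * (1 - a)) s * W s w =
      1 / 4 * (bsc a (lowBit w) s.1 * bsc a (lowBit w) s.2) := by
  have hbsc := isCondPmf_bsc ha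
  obtain ⟨W, hW, h⟩ := exists_condPmf_eq_mul
    (p := fun (s : Bool × Bool) (w : Fin 4) =>
      1 / 4 * (bsc a (lowBit w) s.1 * bsc a (lowBit w) s.2))
    fun s w => mul_nonneg (by norm_num) (mul_nonneg ((hbsc _).1 _) ((hbsc _).1 _))
  exact ⟨W, hW, fun s w => by rw [h, sum_bsc_mul_bsc]⟩

lemma two_mul_mul_one_sub_mem_Icc {a : ℝ} (ha : a ∈ Set.Icc (0 : ℝ) 1) :
    2 * a * (1 - a) ∈ Set.Icc (0 : ℝ) (1 / 2) :=
  ⟨by nlinarith [mul_nonneg ha.1 (sub_nonneg.2 ha.2)], by nlinarith [sq_nonneg (1 - 2 * a)]⟩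

lemma wynerK_dsbs {a : ℝ} (ha : a ∈ Set.Icc (0 : ℝ) 1) :
    wynerK (dsbs (2 * a * (1 - a))) = 1 + binEnt (2 * a * (1 - a)) - 2 * binEnt a := by
  have hρ := Icc_zero_half_subset_Icc_zero_one (two_mul_mul_one_sub_mem_Icc ha)
  have hbsc (w : Fin 4) := isCondPmf_bsc ha (lowBit w)
  rw [← H2_dsbs hρ]
  refine IsLeast.csInf_eq ⟨?_, ?_⟩
  · obtain ⟨W, hW, joint⟩ := exists_wyner_channel ha
    refine ⟨W, hW, fun x w y => ?_, ?_⟩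
    · simp only [joint, ← Finset.mul_sum, ← Finset.sum_mul, (hbsc _).2]
      ring
    · simp only [joint]
      rw [MI_condIndep (fun _ => 1 / 4) hbsc hbsc]
      simp only [sum_bsc_mul_bsc, H2_bsc]
      norm_num
      ring
  · rintro r ⟨W, hW, hM, rfl⟩
    refine le_MI_of_markov (isPmf_dsbs hρ) hW hM (le_of_eq ?_)
    simp [dsbs]
    ring

lemma binEnt_le_binEnt_two_mul_mul_one_sub {a : ℝ} (ha : a ∈ Set.Icc (0 : ℝ) (1 / 2)) :
    binEnt a ≤ binEnt (2 * a * (1 - a)) := by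
  have hρ := two_mul_mul_one_sub_mem_Icc (Icc_zero_half_subset_Icc_zero_one ha)
  simp only [binEnt_eq_binEntropy_div]
  have le : a ≤ 2 * a * (1 - a) := by nlinarith [ha.1, ha.2]
  rw [one_div] at ha hρ
  gcongr
  exact Real.binEntropy_strictMonoOn.monotoneOn ha hρ le

lemma crAchievable_dsbs {a : ℝ} (ha : a ∈ Set.Icc (0 : ℝ) (1 / 2)) :
    CRAchievable (dsbs (2 * a * (1 - a))) (dHam (α := Bool)) (dHam (α := Bool)) a a
      (binEnt (2 * a * (1 - a)) - binEnt a) := by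
  have ha1 := Icc_zero_half_subset_Icc_zero_one ha
  have hρ := Icc_zero_half_subset_Icc_zero_one (two_mul_mul_one_sub_mem_Icc ha1)
  have hbsc (w : Fin 4) := isCondPmf_bsc ha1 (lowBit w)
  obtain ⟨W, hW, joint⟩ := exists_wyner_channel ha1
  have rate : condMI (fun t : Bool × Bool × Fin 4 =>
      1 / 4 * (bsc a (lowBit t.2.2) t.1 * bsc a (lowBit t.2.2) t.2.1)) =
        binEnt (2 * a * (1 - a)) - binEnt a := by
    rw [condMI_condIndep (fun _ => 1 / 4) hbsc hbsc]
    simp only [sum_bsc_mul_bsc, H2_bsc, condH_dsbs hρ]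
    norm_num
    ring
  refine crAchievable_of_condMI_le (isPmf_dsbs hρ) hW lowBit lowBit ?_ ?_
    (sub_nonneg.2 (binEnt_le_binEnt_two_mul_mul_one_sub ha)) ?_ ?_
  · simp only [joint]
    rw [sum_condIndep_mul_fst (A := fun w => bsc a (lowBit w)) (fun _ => 1 / 4) hbsc
      fun x w => dHam x (lowBit w)]
    simp only [sum_bsc_mul_dHam]
    exact (sum_lowBit fun _ => a).trans (by simp [← two_mul]) |>.le
  · simp only [joint]
    rw [sum_condIndep_mul_snd (B := fun w => bsc a (lowBit w)) (fun _ => 1 / 4) hbsc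
      fun y w => dHam y (lowBit w)]
    simp only [sum_bsc_mul_dHam]
    exact (sum_lowBit fun _ => a).trans (by simp [← two_mul]) |>.le
  · simp only [joint]
    exact rate.le
  · simp only [joint, mul_comm (bsc a (lowBit _) (Prod.fst (Prod.snd _)))]
    exact rate.le

lemma RDAchievable.binEnt_sub_le {ρ : ℝ} (hρ : ρ ∈ Set.Icc (0 : ℝ) 1) {a d r : ℝ} (h0 : 0 < a)
    (ha : a ≤ 1 / 2)
    (h : RDAchievable (dsbs ρ) (dHam (α := Bool)) (dHam (α := Bool)) a d r) :
    binEnt ρ - binEnt a ≤ r := by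
  have bound := h.condH_sub_le (isPmf_dsbs hρ) (isCondPmf_bsc ⟨h0.le, by linarith⟩)
    (fun x y => bsc_pos h0 (by linarith) x y) (logb_one_sub_sub_logb_nonneg h0 ha)
    fun x xh => (bsc_comm a xh x ▸ logb_bsc a x xh).ge
  rw [condH_dsbs hρ] at bound
  linarith [binEnt_eq_logb_sub a]

lemma CRRD_dsbs {a : ℝ} (ha : a ∈ Set.Icc (0 : ℝ) (1 / 2)) :
    CRRD (dsbs (2 * a * (1 - a))) (dHam (α := Bool)) (dHam (α := Bool)) a a =
      binEnt (2 * a * (1 - a)) - binEnt a := by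
  refine IsLeast.csInf_eq ⟨⟨sub_nonneg.2 (binEnt_le_binEnt_two_mul_mul_one_sub ha),
    crAchievable_dsbs ha⟩, fun r hr => ?_⟩
  rcases ha.1.eq_or_lt with rfl | h0
  · simpa using hr.1
  · have hρ := two_mul_mul_one_sub_mem_Icc (Icc_zero_half_subset_Icc_zero_one ha)
    exact hr.2.rdAchievable.binEnt_sub_le (Icc_zero_half_subset_Icc_zero_one hρ) h0 ha.2

lemma exists_eq_two_mul_mul_one_sub {ρ : ℝ} (hρ : ρ ∈ Set.Icc (0 : ℝ) (1 / 2)) :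
    ∃ a ∈ Set.Icc (0 : ℝ) (1 / 2), 1 / 2 - √(1 - 2 * ρ) / 2 = a ∧ ρ = 2 * a * (1 - a) := by
  have sqrt_le : √(1 - 2 * ρ) ≤ 1 := Real.sqrt_le_one.2 (by linarith [hρ.1])
  have sq_sqrt : √(1 - 2 * ρ) ^ 2 = 1 - 2 * ρ := Real.sq_sqrt (by linarith [hρ.2])
  refine ⟨1 / 2 - √(1 - 2 * ρ) / 2, ⟨by linarith, by linarith [Real.sqrt_nonneg (1 - 2 * ρ)]⟩,
    rfl, ?_⟩
  linear_combination 1 / 2 * sq_sqrt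

end BinarySymmetric

end TWR

open TWR in
/-- Theorem 3, part (ii): for the DSBS with Hamming
distortions, at `d* = 1/2 − (1/2)√(1−2ρ)`,
`R_CR(d*,d*) = K(X;Y) − R_X(d*) = K(X;Y) − R_Y(d*)`. -/
theorem dsbs_cr_at_threshold
    (ρ : ℝ) (hρ : ρ ∈ Set.Icc (0 : ℝ) (1 / 2)) :
    CRRD (dsbs ρ) (dHam (α := Bool)) (dHam (α := Bool))
        (1 / 2 - Real.sqrt (1 - 2 * ρ) / 2) (1 / 2 - Real.sqrt (1 - 2 * ρ) / 2) =
      wynerK (dsbs ρ) -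
        margRD (margX (dsbs ρ)) (dHam (α := Bool)) (1 / 2 - Real.sqrt (1 - 2 * ρ) / 2) ∧
    CRRD (dsbs ρ) (dHam (α := Bool)) (dHam (α := Bool))
        (1 / 2 - Real.sqrt (1 - 2 * ρ) / 2) (1 / 2 - Real.sqrt (1 - 2 * ρ) / 2) =
      wynerK (dsbs ρ) -
        margRD (margY (dsbs ρ)) (dHam (α := Bool)) (1 / 2 - Real.sqrt (1 - 2 * ρ) / 2) := by
  obtain ⟨a, ha, threshold, rfl⟩ := exists_eq_two_mul_mul_one_sub hρ
  have ha1 := Icc_zero_half_subset_Icc_zero_one ha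
  rw [threshold, margX_dsbs, margY_dsbs, margRD_one_half ha, wynerK_dsbs ha1, CRRD_dsbs ha]
  constructor <;> ring
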